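/- For all integers n ≥ 2 and d ≥ 1 there exists N₀, depending only on n and d, with the following property. Let p be a prime, k ≥ 1, K = GaloisField p k, q = p^k with q ≥ N₀, and let f ∈ MvPolynomial (Fin n) K have total degree between 1 and d and be such that the image of f in MvPolynomial (Fin n) (AlgebraicClosure K) under the algebra map is irreducible. Then there exists x ∈ K^n with f(x) = 0. -/

import Mathlib

namespace LW

open Polynomial

/-- A filtration on a commutative ring, multiplicative up to a constant shift. -/
structure Filt (Q : Type*) [CommRing Q] where
  G : ℕ → AddSubgroup Q
  c : ℕ
  mono : Monotone G
  one : 1 ∈ G 0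
  mul : ∀ a b x y, x ∈ G a → y ∈ G b → x * y ∈ G (a + b + c)

/-- Coordinates in `AdjoinRoot f`. -/
noncomputable def co {Q : Type*} [CommRing Q] {f : Q[X]} (hf : f.Monic) (i : ℕ) :
    AdjoinRoot f →ₗ[Q] Q :=
  (Polynomial.lcoeff Q i).comp (AdjoinRoot.modByMonicHom hf)

section co

variable {Q : Type*} [CommRing Q] {f : Q[X]} (hf : f.Monic)

lemma co_mk {g : Q[X]} (hg : g.degree < f.degree) (i : ℕ) :
    co hf i (AdjoinRoot.mk f g) = g.coeff i := by
  rcases subsingleton_or_nontrivial Q with h | h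
  · exact Subsingleton.elim _ _
  · simp [co, (Polynomial.modByMonic_eq_self_iff hf).2 hg]

lemma co_deg (s : AdjoinRoot f) : (AdjoinRoot.modByMonicHom hf s).degree < f.degree ∨
    Subsingleton Q := by
  rcases subsingleton_or_nontrivial Q with h | h
  · right; exact h
  · left
    obtain ⟨g, rfl⟩ := AdjoinRoot.mk_surjective s
    rw [AdjoinRoot.modByMonicHom_mk]
    exact Polynomial.degree_modByMonic_lt _ hf

lemma co_of_le (s : AdjoinRoot f) {i : ℕ} (hi : f.natDegree ≤ i) : co hf i s = 0 := by
  rcases co_deg hf s with h | h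
  · simp only [co, LinearMap.comp_apply, Polynomial.lcoeff_apply]
    apply Polynomial.coeff_eq_zero_of_degree_lt
    refine h.trans_le ?_
    exact Polynomial.degree_le_of_natDegree_le hi
  · exact Subsingleton.elim _ _

lemma co_repr (s : AdjoinRoot f) :
    s = ∑ i ∈ Finset.range f.natDegree, AdjoinRoot.of f (co hf i s) * AdjoinRoot.root f ^ i := by
  rcases co_deg hf s with h | h
  · conv_lhs => rw [← AdjoinRoot.mk_leftInverse hf s]
    rcases eq_or_ne (AdjoinRoot.modByMonicHom hf s) 0 with h0 | h0
    · simp [co, h0]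
    rw [Polynomial.as_sum_range' _ f.natDegree (Polynomial.natDegree_lt_natDegree h0 h)]
    simp [co, ← Polynomial.C_mul_X_pow_eq_monomial]
  · have : Subsingleton (AdjoinRoot f) :=  (AdjoinRoot.mk_surjective (g := f)).subsingleton
    exact Subsingleton.elim _ _

lemma co_ext {s t : AdjoinRoot f} (h : ∀ i < f.natDegree, co hf i s = co hf i t) : s = t := by
  rw [co_repr hf s, co_repr hf t]
  refine Finset.sum_congr rfl fun i hi => ?_
  rw [h i (Finset.mem_range.1 hi)]

lemma co_sum (c : ℕ → Q) {i : ℕ} (hi : i < f.natDegree) :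
    co hf i (∑ i ∈ Finset.range f.natDegree, AdjoinRoot.of f (c i) * AdjoinRoot.root f ^ i)
      = c i := by
  have : (∑ i ∈ Finset.range f.natDegree, AdjoinRoot.of f (c i) * AdjoinRoot.root f ^ i)
      = AdjoinRoot.mk f (∑ i ∈ Finset.range f.natDegree, C (c i) * X ^ i) := by
    simp
  rw [this, co_mk]
  · simp [Polynomial.finsetSum_coeff, hi]
  · rcases subsingleton_or_nontrivial Q with h | h
    · rw [Subsingleton.elim f 0] at hi
      simp at hi
    refine (Polynomial.degree_sum_le _ _).trans_lt ?_
    rw [Finset.sup_lt_iff]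
    · intro i hi
      refine (Polynomial.degree_C_mul_X_pow_le _ _).trans_lt ?_
      rw [Polynomial.degree_eq_natDegree hf.ne_zero]
      exact_mod_cast Finset.mem_range.1 hi
    · rw [bot_lt_iff_ne_bot, Ne, Polynomial.degree_eq_bot]
      exact hf.ne_zero

lemma co_of_mul (r : Q) (s : AdjoinRoot f) (i : ℕ) :
    co hf i (AdjoinRoot.of f r * s) = r * co hf i s := by
  rw [← AdjoinRoot.algebraMap_eq, ← Algebra.smul_def, map_smul, smul_eq_mul]

lemma co_root_mul (hpos : 0 < f.natDegree) (s : AdjoinRoot f) (i : ℕ) (hi : i < f.natDegree) :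
    co hf i (AdjoinRoot.root f * s) =
      (if i = 0 then 0 else co hf (i - 1) s) - co hf (f.natDegree - 1) s * f.coeff i := by
  rcases subsingleton_or_nontrivial Q with h | h
  · exact Subsingleton.elim _ _
  have hd := (co_deg hf s).resolve_right (not_subsingleton Q)
  set r := AdjoinRoot.modByMonicHom hf s with hr
  have hs : AdjoinRoot.root f * s =
      AdjoinRoot.mk f (X * r - C (r.coeff (f.natDegree - 1)) * f) := by
    simp [hr, AdjoinRoot.mk_leftInverse hf s]
  rw [hs, co_mk]
  · simp only [co, LinearMap.comp_apply, Polynomial.lcoeff_apply, ← hr, coeff_sub, coeff_C_mul]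
    congr 1
    cases i with
    | zero => simp
    | succ i => simp
  · rw [Polynomial.degree_eq_natDegree hf.ne_zero, Polynomial.degree_lt_iff_coeff_zero]
    intro k hk
    obtain ⟨k, rfl⟩ : ∃ j, k = j + 1 := ⟨k - 1, by omega⟩
    rw [coeff_sub, coeff_C_mul, coeff_X_mul]
    rcases hk.lt_or_eq with h1 | h1
    · rw [Polynomial.coeff_eq_zero_of_natDegree_lt h1, mul_zero, sub_zero]
      apply Polynomial.coeff_eq_zero_of_degree_lt
      refine hd.trans_le (Polynomial.degree_le_of_natDegree_le (by omega))
    · rw [← h1, hf.coeff_natDegree, show k = f.natDegree - 1 by omega, mul_one, sub_self]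

end co

namespace Filt

variable {Q : Type*} [CommRing Q] (Φ : Filt Q)

lemma sum_mem {ι : Type*} (s : Finset ι) (g : ι → Q) (a : ℕ) (h : ∀ i ∈ s, g i ∈ Φ.G a) :
    ∑ i ∈ s, g i ∈ Φ.G a := AddSubgroup.sum_mem _ h

lemma prod_mem {ι : Type*} (s : Finset ι) (g : ι → Q) (a : ℕ) (h : ∀ i ∈ s, g i ∈ Φ.G a) :
    ∏ i ∈ s, g i ∈ Φ.G (s.card * (a + Φ.c)) := by
  classical
  induction s using Finset.induction_on with
  | empty => simpa using Φ.one
  | insert i s hi ih =>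
    rw [Finset.prod_insert hi, Finset.card_insert_of_notMem hi]
    refine Φ.mono ?_ (Φ.mul _ _ _ _ (h i (Finset.mem_insert_self _ _))
      (ih fun j hj => h j (Finset.mem_insert_of_mem hj)))
    apply le_of_eq; ring

lemma pow_mem {x : Q} {a : ℕ} (h : x ∈ Φ.G a) (k : ℕ) : x ^ k ∈ Φ.G (k * (a + Φ.c)) := by
  simpa using Φ.prod_mem (Finset.range k) (fun _ => x) a (fun _ _ => h)

lemma det_mem {n : ℕ} (A : Matrix (Fin n) (Fin n) Q) (a : ℕ) (h : ∀ i j, A i j ∈ Φ.G a) :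
    A.det ∈ Φ.G (n * (a + Φ.c)) := by
  rw [Matrix.det_apply]
  refine Φ.sum_mem _ _ _ fun σ _ => ?_
  have := Φ.prod_mem Finset.univ (fun i => A (σ i) i) a (fun i _ => h _ _)
  rw [Finset.card_univ, Fintype.card_fin] at this
  rcases Int.units_eq_one_or (Equiv.Perm.sign σ) with h1 | h1
  · rw [h1]; simpa using this
  · rw [h1]; simpa using this

/-- the coordinate filtration, as a family of subgroups -/
def adjG {f : Q[X]} (hf : f.Monic) (a : ℕ) : AddSubgroup (AdjoinRoot f) where
  carrier := {s | ∀ i < f.natDegree, co hf i s ∈ Φ.G a}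
  zero_mem' := fun i _ => by simpa using (Φ.G a).zero_mem
  add_mem' := fun {x y} hx hy i hi => by
    simpa using (Φ.G a).add_mem (hx i hi) (hy i hi)
  neg_mem' := fun {x} hx i hi => by simpa using (Φ.G a).neg_mem (hx i hi)

lemma mem_adjG {f : Q[X]} (hf : f.Monic) (a : ℕ) (s : AdjoinRoot f) :
    s ∈ Φ.adjG hf a ↔ ∀ i < f.natDegree, co hf i s ∈ Φ.G a := Iff.rfl

lemma adjG_mono {f : Q[X]} (hf : f.Monic) : Monotone (Φ.adjG hf) :=
  fun _ _ hab _ hx i hi => Φ.mono hab (hx i hi)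

lemma adjG_of_mul {f : Q[X]} (hf : f.Monic) {a b : ℕ} {r : Q} {s : AdjoinRoot f}
    (hr : r ∈ Φ.G a) (hs : s ∈ Φ.adjG hf b) :
    AdjoinRoot.of f r * s ∈ Φ.adjG hf (a + b + Φ.c) := fun i hi => by
  rw [co_of_mul]
  exact Φ.mul _ _ _ _ hr (hs i hi)

lemma adjG_root_mul {f : Q[X]} (hf : f.Monic) (hpos : 0 < f.natDegree) {d : ℕ}
    (hd : ∀ i, f.coeff i ∈ Φ.G d) {a : ℕ} {s : AdjoinRoot f}
    (hs : s ∈ Φ.adjG hf a) : AdjoinRoot.root f * s ∈ Φ.adjG hf (a + (d + Φ.c)) := fun i hi => by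
  rw [co_root_mul hf hpos s i hi]
  refine AddSubgroup.sub_mem _ ?_ ?_
  · split_ifs
    · exact AddSubgroup.zero_mem _
    · exact Φ.mono (by omega) (hs (i - 1) (by omega))
  · exact Φ.mono (by omega) (Φ.mul _ _ _ _ (hs _ (by omega)) (hd i))

lemma adjG_root_pow_mul {f : Q[X]} (hf : f.Monic) (hpos : 0 < f.natDegree) {d : ℕ}
    (hd : ∀ i, f.coeff i ∈ Φ.G d) {a : ℕ} {s : AdjoinRoot f}
    (hs : s ∈ Φ.adjG hf a) (k : ℕ) :
    AdjoinRoot.root f ^ k * s ∈ Φ.adjG hf (a + k * (d + Φ.c)) := by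
  induction k with
  | zero => simpa using hs
  | succ k ih =>
    rw [pow_succ', mul_assoc]
    exact Φ.adjG_mono hf (by apply le_of_eq; ring) (Φ.adjG_root_mul hf hpos hd ih)

lemma adjG_one {f : Q[X]} (hf : f.Monic) (hpos : 0 < f.natDegree) :
    (1 : AdjoinRoot f) ∈ Φ.adjG hf 0 := fun i hi => by
  rw [← map_one (AdjoinRoot.mk f), co_mk]
  · rw [coeff_one]
    split_ifs
    · exact Φ.one
    · exact AddSubgroup.zero_mem _
  · exact Polynomial.degree_one_le.trans_lt (Polynomial.natDegree_pos_iff_degree_pos.1 hpos)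

/-- The extended filtration on `AdjoinRoot f`. -/
def adj {f : Q[X]} (hf : f.Monic) (hpos : 0 < f.natDegree) {d : ℕ}
    (hd : ∀ i, f.coeff i ∈ Φ.G d) : Filt (AdjoinRoot f) where
  G := Φ.adjG hf
  c := Φ.c + f.natDegree * (d + Φ.c)
  mono := Φ.adjG_mono hf
  one := Φ.adjG_one hf hpos
  mul := fun a b x y hx hy => by
    rw [co_repr hf x, Finset.sum_mul]
    refine AddSubgroup.sum_mem _ fun i hi => ?_
    rw [mul_assoc]
    have hi' := Finset.mem_range.1 hi
    refine Φ.adjG_mono hf ?_ (Φ.adjG_of_mul hf (hx i hi')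
      (Φ.adjG_root_pow_mul hf hpos hd hy i))
    have := Nat.mul_le_mul_right (d + Φ.c) hi'.le
    omega

/-- Filtration on multivariate polynomials over a filtered ring. -/
def mv (σ : Type*) : Filt (MvPolynomial σ Q) where
  G := fun a =>
    { carrier := {p | (∀ α, MvPolynomial.coeff α p ∈ Φ.G a) ∧ p.totalDegree ≤ a}
      zero_mem' := ⟨fun α => by simpa using (Φ.G a).zero_mem, by simp⟩
      add_mem' := fun {x y} hx hy => ⟨fun α => by
        simpa using (Φ.G a).add_mem (hx.1 α) (hy.1 α),
        (MvPolynomial.totalDegree_add _ _).trans (max_le hx.2 hy.2)⟩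
      neg_mem' := fun {x} hx => ⟨fun α => by simpa using (Φ.G a).neg_mem (hx.1 α),
        by simpa using hx.2⟩ }
  c := Φ.c
  mono := fun a b hab x hx => ⟨fun α => Φ.mono hab (hx.1 α), hx.2.trans hab⟩
  one := ⟨fun α => by
    classical
    rw [MvPolynomial.coeff_one]
    split_ifs
    · exact Φ.one
    · exact AddSubgroup.zero_mem _, by simp⟩
  mul := fun a b x y hx hy => ⟨fun α => by
    classical
    rw [MvPolynomial.coeff_mul]
    exact Φ.sum_mem _ _ _ fun i _ => Φ.mul _ _ _ _ (hx.1 _) (hy.1 _),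
    (MvPolynomial.totalDegree_mul _ _).trans (by have := hx.2; have := hy.2; omega)⟩

lemma mem_mv {σ : Type*} {a : ℕ} {p : MvPolynomial σ Q} :
    p ∈ (Φ.mv σ).G a ↔ (∀ α, MvPolynomial.coeff α p ∈ Φ.G a) ∧ p.totalDegree ≤ a := Iff.rfl

/-- Total degree filtration. -/
def tdeg (σ F : Type*) [CommRing F] : Filt (MvPolynomial σ F) where
  G := fun a =>
    { carrier := {p | p.totalDegree ≤ a}
      zero_mem' := by simp
      add_mem' := fun {x y} hx hy =>
        (MvPolynomial.totalDegree_add _ _).trans (max_le hx hy)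
      neg_mem' := fun {x} hx => by simpa using hx }
  c := 0
  mono := fun a b hab x hx => le_trans hx hab
  one := by simp
  mul := fun a b x y hx hy => by
    have h1 : x.totalDegree ≤ a := hx
    have h2 : y.totalDegree ≤ b := hy
    exact (show (x * y).totalDegree ≤ a + b from (MvPolynomial.totalDegree_mul x y).trans (add_le_add h1 h2))

lemma mem_tdeg {σ F : Type*} [CommRing F] {a : ℕ} {p : MvPolynomial σ F} :
    p ∈ (tdeg σ F).G a ↔ p.totalDegree ≤ a := Iff.rfl

end Filt

section norm

variable {Q : Type*} [CommRing Q] {f : Q[X]} (hf : f.Monic)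

/-- The matrix of multiplication. -/
noncomputable def mulMat (b : AdjoinRoot f) : Matrix (Fin f.natDegree) (Fin f.natDegree) Q :=
  Matrix.of fun i j => co hf i (b * AdjoinRoot.root f ^ (j : ℕ))

lemma mulMat_eq (b : AdjoinRoot f) :
    mulMat hf b = Algebra.leftMulMatrix (AdjoinRoot.powerBasisAux' hf) b := by
  ext i j
  rw [Algebra.leftMulMatrix_eq_repr_mul, AdjoinRoot.powerBasisAux'_repr_apply_to_fun]
  have : (AdjoinRoot.powerBasisAux' hf) j = AdjoinRoot.root f ^ (j : ℕ) := by
    exact (AdjoinRoot.powerBasis' hf).basis_eq_pow j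
  rw [this]
  rfl

lemma det_ne_zero [IsDomain Q] [IsDomain (AdjoinRoot f)] {b : AdjoinRoot f} (hb : b ≠ 0) :
    (mulMat hf b).det ≠ 0 := by
  have := hf.free_adjoinRoot
  have := hf.finite_adjoinRoot
  rw [mulMat_eq, ← Algebra.norm_eq_matrix_det]
  exact Algebra.norm_ne_zero_iff.2 hb

lemma dvd_det (b : AdjoinRoot f) :
    b ∣ AdjoinRoot.of f (mulMat hf b).det := by
  classical
  rw [mulMat_eq]
  set L := Algebra.leftMulMatrix (AdjoinRoot.powerBasisAux' hf) with hL
  have h := Matrix.aeval_self_charpoly (L b)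
  rw [Polynomial.aeval_algHom_apply] at h
  have h2 : Polynomial.aeval b (L b).charpoly = 0 :=
    Algebra.leftMulMatrix_injective (AdjoinRoot.powerBasisAux' hf) (by rw [← hL, h, map_zero])
  have h3 : b ∣ AdjoinRoot.of f ((L b).charpoly.coeff 0) := by
    have := Polynomial.X_mul_divX_add (L b).charpoly
    rw [← this] at h2
    simp only [map_add, map_mul, aeval_X, aeval_C] at h2
    rw [AdjoinRoot.algebraMap_eq] at h2
    rw [eq_neg_of_add_eq_zero_right h2]
    exact (Dvd.intro _ rfl).neg_right
  rw [Matrix.det_eq_sign_charpoly_coeff]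
  rw [map_mul]
  exact h3.mul_left _

lemma det_filt (Φ : Filt Q) (hpos : 0 < f.natDegree) {d : ℕ}
    (hd : ∀ i, f.coeff i ∈ Φ.G d) {a : ℕ} {b : AdjoinRoot f} (hb : b ∈ Φ.adjG hf a) :
    (mulMat hf b).det ∈ Φ.G (f.natDegree * (a + f.natDegree * (d + Φ.c) + Φ.c)) := by
  refine Φ.det_mem _ _ fun i j => ?_
  have := Φ.adjG_root_pow_mul hf hpos hd hb j
  rw [mul_comm (AdjoinRoot.root f ^ (j : ℕ))] at this
  refine Φ.mono ?_ (this i i.2)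
  have := Nat.mul_le_mul_right (d + Φ.c) j.2.le
  omega

lemma det_mem_pow (I : Ideal Q) (b : AdjoinRoot f) (hb : b ∈ I.map (AdjoinRoot.of f)) :
    (mulMat hf b).det ∈ I ^ f.natDegree := by
  have key : ∀ i, ∀ s ∈ I.map (AdjoinRoot.of f), co hf i s ∈ I := by
    intro i s hs
    refine Submodule.span_induction (p := fun s _ => ∀ t, co hf i (t * s) ∈ I)
      ?_ ?_ ?_ ?_ hs 1 |> fun h => by simpa using h
    · rintro _ ⟨r, hr, rfl⟩ t
      rw [mul_comm, co_of_mul]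
      exact I.mul_mem_right _ hr
    · intro t; simp
    · intro x y _ _ hx hy t
      rw [mul_add, map_add]; exact I.add_mem (hx t) (hy t)
    · intro a x _ hx t
      rw [smul_eq_mul, ← mul_assoc]; exact hx _
  rw [Matrix.det_apply]
  refine Ideal.sum_mem _ fun σ _ => ?_
  have : ∏ i, mulMat hf b (σ i) i ∈ I ^ f.natDegree := by
    have h2 := Ideal.prod_mem_prod (s := Finset.univ) (I := fun _ : Fin f.natDegree => I)
      (x := fun i => mulMat hf b (σ i) i) (fun i _ => key _ _ (Ideal.mul_mem_right _ _ hb))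
    simpa using h2
  rcases Int.units_eq_one_or (Equiv.Perm.sign σ) with h1 | h1
  · rw [h1]; simpa using this
  · rw [h1]; simpa using this

end norm

end LW

namespace LW

/-- exponent vectors of degree `< A` -/
abbrev Idx (m A : ℕ) := {γ : Fin m →₀ ℕ // γ.degree < A}

lemma le_degree {m : ℕ} (γ : Fin m →₀ ℕ) (i : Fin m) : γ i ≤ γ.degree := Finsupp.le_degree i γ

/-- embedding into a box -/
def toBox (m A : ℕ) : Idx m A → (Fin m → Fin A) :=
  fun γ i => ⟨γ.1 i, (le_degree γ.1 i).trans_lt γ.2⟩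

lemma toBox_inj (m A : ℕ) : Function.Injective (toBox m A) := by
  intro x y h
  ext i
  have := congrFun h i
  simpa [toBox] using this

instance (m A : ℕ) : Finite (Idx m A) := Finite.of_injective _ (toBox_inj m A)

noncomputable instance (m A : ℕ) : Fintype (Idx m A) := Fintype.ofFinite _

/-- number of exponent vectors of degree `< A` -/
noncomputable def cnt (m A : ℕ) : ℕ := Fintype.card (Idx m A)

lemma cnt_le (m A : ℕ) : cnt m A ≤ A ^ m := by
  have := Fintype.card_le_of_injective _ (toBox_inj m A)
  simpa [cnt] using this

lemma cnt_pos (m A : ℕ) (hA : 0 < A) : 0 < cnt m A := by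
  refine Fintype.card_pos_iff.2 ⟨⟨0, by simpa using hA⟩⟩

lemma cnt_mono (m : ℕ) {A B : ℕ} (h : A ≤ B) : cnt m A ≤ cnt m B := by
  refine Fintype.card_le_of_injective (fun γ : Idx m A => (⟨γ.1, γ.2.trans_le h⟩ : Idx m B)) ?_
  intro x y h
  simpa [Subtype.ext_iff] using h

lemma exists_ratio (m D C : ℕ) : ∃ A : ℕ, 0 < A ∧ D * cnt m (A + C) < (D + 1) * cnt m A := by
  by_contra! hcon
  have h1 : ∀ k : ℕ, (D + 1) ^ k ≤ D ^ k * cnt m (1 + k * C) := by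
    intro k
    induction k with
    | zero => have := cnt_pos m 1 one_pos; simp; omega
    | succ k ih =>
      calc (D + 1) ^ (k + 1) = (D + 1) * (D + 1) ^ k := by ring
        _ ≤ (D + 1) * (D ^ k * cnt m (1 + k * C)) := Nat.mul_le_mul_left _ ih
        _ = D ^ k * ((D + 1) * cnt m (1 + k * C)) := by ring
        _ ≤ D ^ k * (D * cnt m (1 + k * C + C)) := Nat.mul_le_mul_left _ (hcon _ (by omega))
        _ = D ^ (k + 1) * cnt m (1 + (k + 1) * C) := by
          rw [show 1 + (k + 1) * C = 1 + k * C + C by ring]; ring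
  have h2 : ∀ k : ℕ, 1 ≤ k → (D + 1) ^ k ≤ D ^ k * ((1 + C) ^ m * k ^ m) := by
    intro k hk
    refine (h1 k).trans (Nat.mul_le_mul_left _ ((cnt_le _ _).trans ?_))
    rw [← mul_pow]
    apply Nat.pow_le_pow_left
    nlinarith
  rcases Nat.eq_zero_or_pos D with rfl | hD
  · have := h2 1 le_rfl
    simp at this
  have h3 : ∀ k : ℕ, 1 ≤ k →
      (((1 + C : ℕ) : ℝ) ^ m)⁻¹ ≤ (k : ℝ) ^ m * ((D : ℝ) / (D + 1)) ^ k := by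
    intro k hk
    have := h2 k hk
    have h' : ((D : ℝ) + 1) ^ k ≤ (D : ℝ) ^ k * (((1 + C : ℕ) : ℝ) ^ m * (k : ℝ) ^ m) := by
      exact_mod_cast this
    rw [div_pow, inv_le_iff_one_le_mul₀ (by positivity)]
    rw [← mul_div_assoc, div_mul_eq_mul_div, le_div_iff₀ (by positivity)]
    linarith
  have h4 := tendsto_pow_const_mul_const_pow_of_abs_lt_one m
    (r := (D : ℝ) / (D + 1)) (by
      rw [abs_of_nonneg (by positivity), div_lt_one (by positivity)]; linarith)
  have h5 : (((1 + C : ℕ) : ℝ) ^ m)⁻¹ ≤ 0 :=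
    ge_of_tendsto h4 (Filter.eventually_atTop.2 ⟨1, h3⟩)
  have h6 : 0 < (((1 + C : ℕ) : ℝ) ^ m)⁻¹ := by positivity
  linarith

section degree

open MvPolynomial

variable {F : Type*} [Field F] {m : ℕ} (q : ℕ)

/-- The univariate piece. -/
noncomputable def Ez (i : Fin m) (k : ℕ) : MvPolynomial (Fin m) F :=
  X i ^ (k % q) * (X i ^ q - X i) ^ (k / q)

/-- The adapted basis. -/
noncomputable def E (δ : Fin m →₀ ℕ) : MvPolynomial (Fin m) F := ∏ i, Ez q i (δ i)

/-- monomial plus terms of smaller degree -/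
def Lead (p : MvPolynomial (Fin m) F) (δ : Fin m →₀ ℕ) : Prop :=
  ∃ r : MvPolynomial (Fin m) F, p = monomial δ 1 + r ∧ ∀ ε, δ.degree ≤ ε.degree → coeff ε r = 0

lemma Lead.mul {p p' : MvPolynomial (Fin m) F} {δ δ' : Fin m →₀ ℕ} (h : Lead p δ)
    (h' : Lead p' δ') : Lead (p * p') (δ + δ') := by
  classical
  obtain ⟨r, rfl, hr⟩ := h
  obtain ⟨r', rfl, hr'⟩ := h'
  refine ⟨monomial δ 1 * r' + r * monomial δ' 1 + r * r', ?_, ?_⟩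
  · rw [show (monomial (δ + δ') (1 : F)) = monomial δ 1 * monomial δ' 1 by
      rw [monomial_mul, one_mul]]
    ring
  · intro ε hε
    rw [map_add] at hε
    simp only [coeff_add, coeff_mul]
    have hdeg : ∀ x ∈ Finset.HasAntidiagonal.antidiagonal ε, x.1.degree + x.2.degree = ε.degree := by
      intro x hx
      rw [← map_add, Finset.HasAntidiagonal.mem_antidiagonal.1 hx]
    rw [Finset.sum_eq_zero, Finset.sum_eq_zero, Finset.sum_eq_zero]
    · simp
    · intro x hx
      have := hdeg x hx
      by_cases h1 : δ.degree ≤ x.1.degree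
      · rw [hr _ h1, zero_mul]
      · rw [hr' _ (by omega), mul_zero]
    · intro x hx
      have := hdeg x hx
      rw [coeff_monomial]
      split_ifs with h1
      · rw [hr _ (by rw [← h1] at this; omega), zero_mul]
      · rw [mul_zero]
    · intro x hx
      have := hdeg x hx
      rw [coeff_monomial]
      split_ifs with h1
      · rw [hr' _ (by rw [← h1] at this; omega), mul_zero]
      · rw [zero_mul]

lemma Lead.one : Lead (1 : MvPolynomial (Fin m) F) 0 := ⟨0, by simp, by simp⟩

lemma Lead.pow {p : MvPolynomial (Fin m) F} {δ : Fin m →₀ ℕ} (h : Lead p δ) (k : ℕ) :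
    Lead (p ^ k) (k • δ) := by
  induction k with
  | zero => simpa using Lead.one
  | succ k ih => rw [pow_succ, succ_nsmul]; exact ih.mul h

lemma Lead.X (i : Fin m) : Lead (MvPolynomial.X i : MvPolynomial (Fin m) F) (Finsupp.single i 1) :=
  ⟨0, by simp [MvPolynomial.X], by simp⟩

lemma Lead.Z (hq : 2 ≤ q) (i : Fin m) :
    Lead (MvPolynomial.X i ^ q - MvPolynomial.X i : MvPolynomial (Fin m) F) (Finsupp.single i q) := by
  classical
  refine ⟨- MvPolynomial.X i, by rw [X_pow_eq_monomial, sub_eq_add_neg], fun ε hε => ?_⟩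
  rw [Finsupp.degree_single] at hε
  rw [coeff_neg, coeff_X, if_neg, neg_zero]
  rintro rfl
  rw [Finsupp.degree_single] at hε
  omega

lemma Lead.E (hq : 2 ≤ q) (δ : Fin m →₀ ℕ) : Lead (E q δ : MvPolynomial (Fin m) F) δ := by
  have h1 : ∀ i, Lead (Ez q i (δ i) : MvPolynomial (Fin m) F) (Finsupp.single i (δ i)) := by
    intro i
    have := ((Lead.X (F := F) i).pow (δ i % q)).mul ((Lead.Z (F := F) q hq i).pow (δ i / q))
    rw [Finsupp.smul_single, Finsupp.smul_single, ← Finsupp.single_add] at this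
    have h2 : (δ i % q) • 1 + (δ i / q) • q = δ i := by
      simp only [smul_eq_mul, mul_one]
      rw [mul_comm (δ i / q)]
      exact Nat.mod_add_div _ _
    rw [h2] at this
    exact this
  have h2 : ∀ s : Finset (Fin m), Lead (∏ i ∈ s, Ez q i (δ i) : MvPolynomial (Fin m) F)
      (∑ i ∈ s, Finsupp.single i (δ i)) := by
    intro s
    classical
    induction s using Finset.induction_on with
    | empty => simpa using Lead.one
    | insert i s hi ih =>
      rw [Finset.prod_insert hi, Finset.sum_insert hi]
      exact (h1 i).mul ih
  have h3 := h2 Finset.univ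
  rwa [Finsupp.univ_sum_single] at h3

/-- span of the basis elements of high order -/
noncomputable def Sp (F : Type*) [Field F] (m q k : ℕ) : Submodule F (MvPolynomial (Fin m) F) :=
  Submodule.span F (E q '' {δ | k ≤ ∑ i, δ i / q})

lemma E_update (δ : Fin m →₀ ℕ) (i : Fin m) (a : ℕ) :
    (E q (δ.update i a) : MvPolynomial (Fin m) F) =
      Ez q i a * ∏ j ∈ Finset.univ.erase i, Ez q j (δ j) := by
  classical
  rw [E, ← Finset.mul_prod_erase _ _ (Finset.mem_univ i)]
  congr 1
  · simp
  · refine Finset.prod_congr rfl fun j hj => ?_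
    rw [Finsupp.update_apply, if_neg (Finset.ne_of_mem_erase hj)]

lemma E_eq (δ : Fin m →₀ ℕ) (i : Fin m) :
    (E q δ : MvPolynomial (Fin m) F) =
      Ez q i (δ i) * ∏ j ∈ Finset.univ.erase i, Ez q j (δ j) := by
  classical
  rw [E, ← Finset.mul_prod_erase _ _ (Finset.mem_univ i)]

lemma sum_update (δ : Fin m →₀ ℕ) (i : Fin m) (a : ℕ) :
    ∑ j, (δ.update i a) j / q + δ i / q = ∑ j, δ j / q + a / q := by
  classical
  rw [← Finset.add_sum_erase _ _ (Finset.mem_univ i),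
    ← Finset.add_sum_erase _ (fun j => δ j / q) (Finset.mem_univ i)]
  have : ∑ j ∈ Finset.univ.erase i, (δ.update i a) j / q
      = ∑ j ∈ Finset.univ.erase i, δ j / q := by
    refine Finset.sum_congr rfl fun j hj => ?_
    rw [Finsupp.update_apply, if_neg (Finset.ne_of_mem_erase hj)]
  rw [this]
  simp
  omega

lemma Sp_X (hq : 2 ≤ q) (k : ℕ) (i : Fin m) (p : MvPolynomial (Fin m) F) (hp : p ∈ Sp F m q k) :
    X i * p ∈ Sp F m q k := by
  induction hp using Submodule.span_induction with
  | zero => simp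
  | add x y _ _ hx hy => rw [mul_add]; exact Submodule.add_mem _ hx hy
  | smul a x _ hx => rw [mul_smul_comm]; exact Submodule.smul_mem _ _ hx
  | mem x hx =>
    obtain ⟨δ, hδ, rfl⟩ := hx
    have hδ' : k ≤ ∑ i, δ i / q := hδ
    have hmem : ∀ a, δ i / q ≤ a / q → (E q (δ.update i a) : MvPolynomial (Fin m) F) ∈ Sp F m q k := by
      intro a ha
      refine Submodule.subset_span ⟨_, ?_, rfl⟩
      have := sum_update q δ i a
      show k ≤ _
      omega
    have hdm := Nat.mod_add_div (δ i) q
    have hlt := Nat.mod_lt (δ i) (show q > 0 by omega)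
    by_cases h : δ i % q + 1 < q
    · have h1 : (δ i + 1) % q = δ i % q + 1 := by
        rw [Nat.add_mod, Nat.mod_eq_of_lt (show 1 < q by omega), Nat.mod_eq_of_lt h]
      have h2 : (δ i + 1) / q = δ i / q := by
        rw [Nat.div_eq_iff (by omega)]
        rw [mul_comm]
        omega
      have : X i * (E q δ : MvPolynomial (Fin m) F) = E q (δ.update i (δ i + 1)) := by
        rw [E_update, E_eq q δ i, ← mul_assoc, Ez, Ez, h1, h2]
        ring
      rw [this]
      exact hmem _ h2.ge
    · have h0 : δ i % q = q - 1 := by omega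
      have h3 : δ i + 1 = q * (δ i / q + 1) := by rw [mul_add]; omega
      have h1 : (δ i + 1) % q = 0 := by rw [h3]; simp
      have h2 : (δ i + 1) / q = δ i / q + 1 := by
        rw [h3]; exact Nat.mul_div_cancel_left _ (by omega)
      have h4 : (q * (δ i / q) + 1) % q = 1 := by
        rw [Nat.mul_add_mod, Nat.mod_eq_of_lt (by omega)]
      have h5 : (q * (δ i / q) + 1) / q = δ i / q := by
        rw [Nat.mul_add_div (by omega), Nat.div_eq_of_lt (show 1 < q by omega), add_zero]
      have : X i * (E q δ : MvPolynomial (Fin m) F) = E q (δ.update i (δ i + 1))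
          + E q (δ.update i (q * (δ i / q) + 1)) := by
        rw [E_update, E_update, E_eq q δ i, ← mul_assoc, ← add_mul, Ez, Ez, Ez, h1, h2, h4, h5, h0]
        congr 1
        rw [← mul_assoc, ← pow_succ', show q - 1 + 1 = q by omega, pow_succ]
        ring
      rw [this]
      exact Submodule.add_mem _ (hmem _ (by omega)) (hmem _ (by omega))

lemma Sp_mul (hq : 2 ≤ q) (k : ℕ) (r p : MvPolynomial (Fin m) F) (hp : p ∈ Sp F m q k) :
    r * p ∈ Sp F m q k := by
  induction r using MvPolynomial.induction_on with
  | C a => rw [← smul_eq_C_mul]; exact Submodule.smul_mem _ _ hp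
  | add x y hx hy => rw [add_mul]; exact Submodule.add_mem _ hx hy
  | mul_X x i hx =>
    rw [mul_comm x, mul_assoc]
    exact Sp_X q hq k i _ hx

lemma Sp_Z (hq : 2 ≤ q) (k : ℕ) (i : Fin m) (p : MvPolynomial (Fin m) F) (hp : p ∈ Sp F m q k) :
    (X i ^ q - X i) * p ∈ Sp F m q (k + 1) := by
  induction hp using Submodule.span_induction with
  | zero => simp
  | add x y _ _ hx hy => rw [mul_add]; exact Submodule.add_mem _ hx hy
  | smul a x _ hx => rw [mul_smul_comm]; exact Submodule.smul_mem _ _ hx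
  | mem x hx =>
    obtain ⟨δ, hδ, rfl⟩ := hx
    have hδ' : k ≤ ∑ i, δ i / q := hδ
    have h1 : (δ i + q) % q = δ i % q := by simp
    have h2 : (δ i + q) / q = δ i / q + 1 := Nat.add_div_right _ (by omega)
    have : (X i ^ q - X i) * (E q δ : MvPolynomial (Fin m) F) = E q (δ.update i (δ i + q)) := by
      rw [E_update, E_eq q δ i, ← mul_assoc, Ez, Ez, h1, h2]
      ring
    rw [this]
    refine Submodule.subset_span ⟨_, ?_, rfl⟩
    have := sum_update q δ i (δ i + q)
    show k + 1 ≤ _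
    omega

/-- The ideal generated by the `X i ^ q - X i`. -/
noncomputable def IZ (F : Type*) [Field F] (m q : ℕ) : Ideal (MvPolynomial (Fin m) F) :=
  Ideal.span (Set.range fun i => X i ^ q - X i)

lemma IZ_pow_le (hq : 2 ≤ q) (k : ℕ) (p : MvPolynomial (Fin m) F) (hp : p ∈ IZ F m q ^ k) :
    p ∈ Sp F m q k := by
  induction k generalizing p with
  | zero =>
    rw [← mul_one p]
    refine Sp_mul q hq 0 p 1 (Submodule.subset_span ⟨0, by simp, ?_⟩)
    simp [E, Ez]
  | succ k ih =>
    rw [pow_succ'] at hp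
    refine Submodule.mul_induction_on hp ?_ ?_
    · intro x hx y hy
      refine Submodule.span_induction (p := fun x _ => ∀ y ∈ IZ F m q ^ k, x * y ∈ Sp F m q (k + 1))
        ?_ ?_ ?_ ?_ hx y hy
      · rintro _ ⟨i, rfl⟩ y hy
        exact Sp_Z q hq k i y (ih y hy)
      · intro y _; simp
      · intro a b _ _ ha hb y hy; rw [add_mul]; exact Submodule.add_mem _ (ha y hy) (hb y hy)
      · intro a b _ hb y hy
        rw [smul_eq_mul, mul_assoc]
        exact Sp_mul q hq _ _ _ (hb y hy)
    · intro x y hx hy; exact Submodule.add_mem _ hx hy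

theorem degree_of_mem_pow (hq : 2 ≤ q) (k : ℕ) (p : MvPolynomial (Fin m) F)
    (hp : p ∈ IZ F m q ^ k) (h0 : p ≠ 0) : q * k ≤ p.totalDegree := by
  classical
  have h1 := IZ_pow_le q hq k p hp
  rw [Sp, Finsupp.mem_span_image_iff_linearCombination] at h1
  obtain ⟨l, hl, rfl⟩ := h1
  have hl0 : l.support.Nonempty := by
    rw [Finsupp.support_nonempty_iff]
    rintro rfl
    exact h0 (map_zero _)
  obtain ⟨δ, hδ, hmax⟩ := l.support.exists_max_image (fun δ => δ.degree) hl0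
  have hco : coeff δ (Finsupp.linearCombination F (E q : _ → MvPolynomial (Fin m) F) l) = l δ := by
    rw [Finsupp.linearCombination_apply, Finsupp.sum, coeff_sum, Finset.sum_eq_single δ]
    · obtain ⟨r, h1, h2⟩ := Lead.E (F := F) q hq δ
      rw [coeff_smul, h1, coeff_add, h2 δ le_rfl, coeff_monomial]
      simp
    · intro ε hε hne
      obtain ⟨r, h1, h2⟩ := Lead.E (F := F) q hq ε
      rw [coeff_smul, h1, coeff_add, h2 δ (hmax ε hε), coeff_monomial, if_neg hne]
      simp
    · intro h; exact absurd hδ h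
  have h2 : δ ∈ (Finsupp.linearCombination F (E q : _ → MvPolynomial (Fin m) F) l).support := by
    rw [mem_support_iff, hco]
    exact Finsupp.mem_support_iff.1 hδ
  have h3 := le_totalDegree h2
  have h4 : k ≤ ∑ i, δ i / q := hl hδ
  have h5 : (δ.sum fun _ e => e) = ∑ i, δ i := Finsupp.sum_fintype _ _ (fun _ => rfl)
  rw [h5] at h3
  refine le_trans ?_ h3
  calc q * k ≤ q * ∑ i, δ i / q := Nat.mul_le_mul_left _ h4
    _ = ∑ i, q * (δ i / q) := Finset.mul_sum _ _ _
    _ ≤ ∑ i, δ i := Finset.sum_le_sum fun i _ => Nat.mul_div_le _ _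

end degree

end LW

namespace LW

open Polynomial

namespace Filt

variable {Q : Type*} [CommRing Q] (Φ : Filt Q)

/-- Coefficientwise filtration on polynomials. -/
def mvc (σ : Type*) : Filt (MvPolynomial σ Q) where
  G := fun a =>
    { carrier := {p | ∀ α, MvPolynomial.coeff α p ∈ Φ.G a}
      zero_mem' := fun α => by simpa using (Φ.G a).zero_mem
      add_mem' := fun {x y} hx hy α => by
        simpa using (Φ.G a).add_mem (hx α) (hy α)
      neg_mem' := fun {x} hx α => by simpa using (Φ.G a).neg_mem (hx α) }
  c := Φ.c
  mono := fun _ _ hab _ hx α => Φ.mono hab (hx α)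
  one := fun α => by
    classical
    rw [MvPolynomial.coeff_one]
    split_ifs
    · exact Φ.one
    · exact AddSubgroup.zero_mem _
  mul := fun a b x y hx hy α => by
    classical
    rw [MvPolynomial.coeff_mul]
    exact Φ.sum_mem _ _ _ fun β _ => Φ.mul _ _ _ _ (hx _) (hy _)

lemma mem_mvc {σ : Type*} {a : ℕ} {p : MvPolynomial σ Q} :
    p ∈ (Φ.mvc σ).G a ↔ ∀ α, MvPolynomial.coeff α p ∈ Φ.G a := Iff.rfl

/-- Pull back of a filtration. -/
def comap {Q' : Type*} [CommRing Q'] (h : Q' →+* Q) : Filt Q' where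
  G := fun a => (Φ.G a).comap h.toAddMonoidHom
  c := Φ.c
  mono := fun _ _ hab _ hx => Φ.mono hab hx
  one := by simpa using Φ.one
  mul := fun a b x y hx hy => by
    have := Φ.mul a b (h x) (h y) hx hy
    rw [← map_mul] at this
    exact this

lemma mem_comap {Q' : Type*} [CommRing Q'] (h : Q' →+* Q) {a : ℕ} {p : Q'} :
    p ∈ (Φ.comap h).G a ↔ h p ∈ Φ.G a := Iff.rfl

lemma pow_mul_mem {x s : Q} {a b : ℕ} (hx : x ∈ Φ.G b) (hs : s ∈ Φ.G a) (k : ℕ) :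
    x ^ k * s ∈ Φ.G (a + k * (b + Φ.c)) := by
  induction k with
  | zero => simpa using hs
  | succ k ih =>
    rw [pow_succ', mul_assoc]
    refine Φ.mono ?_ (Φ.mul _ _ _ _ hx ih)
    rw [add_mul, one_mul]; omega

lemma prod_pow_mul_mem {ι : Type*} (x : ι → Q) {s : Q} {a b : ℕ} (hx : ∀ i, x i ∈ Φ.G b)
    (hs : s ∈ Φ.G a) (t : Finset ι) (k : ι → ℕ) :
    (∏ i ∈ t, x i ^ k i) * s ∈ Φ.G (a + (∑ i ∈ t, k i) * (b + Φ.c)) := by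
  classical
  induction t using Finset.induction_on with
  | empty => simpa using hs
  | insert i t hi ih =>
    rw [Finset.prod_insert hi, Finset.sum_insert hi, mul_assoc]
    refine Φ.mono ?_ (Φ.pow_mul_mem (hx i) ih (k i))
    rw [add_mul]; omega

end Filt

section setup

variable {F : Type*} [Field F] {m : ℕ} (f : (MvPolynomial (Fin m) F)[X])

/-- coefficient ring of the second copy -/
abbrev ST := MvPolynomial (Fin m) (AdjoinRoot f)

/-- scalars -/
noncomputable def sc : F →+* AdjoinRoot f := (AdjoinRoot.of f).comp MvPolynomial.C

/-- the coordinate functions -/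
noncomputable def xx (i : Fin m) : AdjoinRoot f := AdjoinRoot.of f (MvPolynomial.X i)

/-- inclusion of the second copy -/
noncomputable def tau : MvPolynomial (Fin m) F →+* ST f := MvPolynomial.map (sc f)

/-- second copy of the polynomial -/
noncomputable def fU : (ST f)[X] := f.map (tau f)

/-- the double -/
abbrev BB := AdjoinRoot (fU f)

variable {f}

lemma fU_monic (hf : f.Monic) : (fU f).Monic := hf.map _

lemma eval₂_tau {A : Type*} [CommRing A] (u : AdjoinRoot f →+* A) (t : Fin m → A)
    (r : MvPolynomial (Fin m) F) :
    MvPolynomial.eval₂Hom u t (tau f r) = MvPolynomial.eval₂Hom (u.comp (sc f)) t r := by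
  simp [tau, MvPolynomial.eval₂_map]

/-- universal property -/
noncomputable def bhom {A : Type*} [CommRing A] (u : AdjoinRoot f →+* A) (t : Fin m → A) (w : A)
    (h : f.eval₂ (MvPolynomial.eval₂Hom (u.comp (sc f)) t) w = 0) : BB f →+* A :=
  AdjoinRoot.lift (MvPolynomial.eval₂Hom u t) w (by
    rw [fU, Polynomial.eval₂_map]
    convert h using 2
    ext r
    · simp [tau]
    · simp [tau])

lemma bhom_of {A : Type*} [CommRing A] (u : AdjoinRoot f →+* A) (t : Fin m → A) (w : A)
    (h : f.eval₂ (MvPolynomial.eval₂Hom (u.comp (sc f)) t) w = 0) (p : ST f) :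
    bhom u t w h (AdjoinRoot.of (fU f) p) = MvPolynomial.eval₂Hom u t p := by
  simp only [bhom, AdjoinRoot.lift_of]

lemma bhom_root {A : Type*} [CommRing A] (u : AdjoinRoot f →+* A) (t : Fin m → A) (w : A)
    (h : f.eval₂ (MvPolynomial.eval₂Hom (u.comp (sc f)) t) w = 0) :
    bhom u t w h (AdjoinRoot.root (fU f)) = w := by
  simp [bhom]

lemma eval₂_of_eq : MvPolynomial.eval₂Hom (sc f) (xx f) = AdjoinRoot.of f := by
  ext r <;> simp [sc, xx]

lemma eval₂_root : f.eval₂ (MvPolynomial.eval₂Hom (sc f) (xx f)) (AdjoinRoot.root f) = 0 := by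
  rw [eval₂_of_eq]; exact AdjoinRoot.eval₂_root f

lemma natDegree_pos_nontriv (hf : f.Monic) (hpos : 0 < f.natDegree) :
    Nontrivial (AdjoinRoot f) := AdjoinRoot.nontrivial f (by
      intro h
      rw [Polynomial.degree_eq_natDegree hf.ne_zero] at h
      have : f.natDegree = 0 := by exact_mod_cast h
      omega)

lemma fU_natDegree (hf : f.Monic) (hpos : 0 < f.natDegree) : (fU f).natDegree = f.natDegree := by
  have := natDegree_pos_nontriv hf hpos
  exact hf.natDegree_map _

/-- existence of points -/
lemma exists_point [IsAlgClosed F] (hf : f.Monic) (hpos : 0 < f.natDegree)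
    [IsDomain (AdjoinRoot f)] (s : AdjoinRoot f) (hs : s ≠ 0) :
    ∃ ε : AdjoinRoot f →+* F, ε.comp (sc f) = RingHom.id F ∧ ε s ≠ 0 := by
  have h1 := det_ne_zero hf hs
  obtain ⟨x, hx⟩ : ∃ x : Fin m → F, MvPolynomial.eval x (mulMat hf s).det ≠ 0 := by
    by_contra! h
    exact h1 (MvPolynomial.funext (by simpa using h))
  have h2 : (f.map (MvPolynomial.eval x)).degree ≠ 0 := by
    rw [hf.degree_map, Polynomial.degree_eq_natDegree hf.ne_zero]
    intro h
    have : f.natDegree = 0 := by exact_mod_cast h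
    omega
  obtain ⟨y, hy⟩ := IsAlgClosed.exists_root _ h2
  refine ⟨AdjoinRoot.lift (MvPolynomial.eval x) y (by
    rw [← Polynomial.eval_map]; exact hy), ?_, ?_⟩
  · ext r; simp [sc]
  · obtain ⟨t, ht⟩ := dvd_det hf s
    intro h0
    apply hx
    have := congrArg (AdjoinRoot.lift (MvPolynomial.eval x) y (by
      rw [← Polynomial.eval_map]; exact hy)) ht
    rw [AdjoinRoot.lift_of, map_mul, h0, zero_mul] at this
    exact this

/-- specialisation at a point -/
noncomputable def epsB (ε : AdjoinRoot f →+* F) (hε : ε.comp (sc f) = RingHom.id F) :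
    BB f →+* AdjoinRoot f :=
  bhom ((sc f).comp ε) (xx f) (AdjoinRoot.root f) (by
    rw [RingHom.comp_assoc, hε, RingHom.comp_id]; exact eval₂_root)

lemma eval₂_sc (ε : AdjoinRoot f →+* F) (p : ST f) :
    MvPolynomial.eval₂Hom ((sc f).comp ε) (xx f) p = AdjoinRoot.of f (MvPolynomial.map ε p) := by
  rw [← eval₂_of_eq]
  simp [MvPolynomial.eval₂_map]

lemma epsB_eq (hf : f.Monic) (hpos : 0 < f.natDegree) (ε : AdjoinRoot f →+* F)
    (hε : ε.comp (sc f) = RingHom.id F) (b : BB f) :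
    epsB ε hε b = ∑ i ∈ Finset.range f.natDegree,
      AdjoinRoot.of f (MvPolynomial.map ε (co (fU_monic hf) i b)) * AdjoinRoot.root f ^ i := by
  conv_lhs => rw [co_repr (fU_monic hf) b]
  rw [map_sum, fU_natDegree hf hpos]
  refine Finset.sum_congr rfl fun i _ => ?_
  rw [map_mul, map_pow, epsB, bhom_of, bhom_root, eval₂_sc]

lemma epsB_ne (hf : f.Monic) (hpos : 0 < f.natDegree) (b : BB f) (hb : b ≠ 0) :
    ∃ s : AdjoinRoot f, s ≠ 0 ∧ ∀ (ε : AdjoinRoot f →+* F) (hε : ε.comp (sc f) = RingHom.id F),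
      ε s ≠ 0 → epsB ε hε b ≠ 0 := by
  have h1 : ∃ i < f.natDegree, co (fU_monic hf) i b ≠ 0 := by
    by_contra! h
    apply hb
    refine co_ext (fU_monic hf) fun i hi => ?_
    rw [h i (by rwa [fU_natDegree hf hpos] at hi), map_zero]
  obtain ⟨i, hi, h2⟩ := h1
  obtain ⟨α, hα⟩ := MvPolynomial.ne_zero_iff.1 h2
  refine ⟨_, hα, fun ε hε h3 h4 => h3 ?_⟩
  rw [epsB_eq hf hpos] at h4
  have h5 := congrArg (co hf i) h4
  rw [co_sum hf (fun i => MvPolynomial.map ε (co (fU_monic hf) i b)) hi, map_zero] at h5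
  have h6 := congrArg (MvPolynomial.coeff α) h5
  simpa [MvPolynomial.coeff_map] using h6

lemma isDomain_BB [IsAlgClosed F] (hf : f.Monic) (hpos : 0 < f.natDegree)
    [IsDomain (AdjoinRoot f)] : IsDomain (BB f) := by
  have : Nontrivial (BB f) := by
    refine AdjoinRoot.nontrivial _ ?_
    rw [Polynomial.degree_eq_natDegree (fU_monic hf).ne_zero, fU_natDegree hf hpos]
    intro h
    have : f.natDegree = 0 := by exact_mod_cast h
    omega
  have : NoZeroDivisors (BB f) := by
    refine ⟨fun {a b} hab => ?_⟩
    by_contra! h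
    obtain ⟨s, hs, h1⟩ := epsB_ne hf hpos a h.1
    obtain ⟨t, ht, h2⟩ := epsB_ne hf hpos b h.2
    obtain ⟨ε, hε, h3⟩ := exists_point hf hpos (s * t) (mul_ne_zero hs ht)
    rw [map_mul] at h3
    have h4 := congrArg (epsB ε hε) hab
    rw [map_mul, map_zero] at h4
    exact mul_ne_zero (h1 ε hε (left_ne_zero_of_mul h3)) (h2 ε hε (right_ne_zero_of_mul h3)) h4
  exact NoZeroDivisors.to_isDomain _

end setup

end LW

namespace LW

open Polynomial

lemma fixed_point {K L : Type*} [Field K] [Fintype K] [Field L] (j : K →+* L) (z : L)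
    (hz : z ^ Fintype.card K = z) : ∃ c, j c = z := by
  classical
  have h0 : (X ^ Fintype.card K - X : L[X]) ≠ 0 :=
    FiniteField.X_pow_card_sub_X_ne_zero L Fintype.one_lt_card
  have h1 : Finset.univ.image j ⊆ (X ^ Fintype.card K - X : L[X]).roots.toFinset := by
    intro w hw
    obtain ⟨c, -, rfl⟩ := Finset.mem_image.1 hw
    rw [Multiset.mem_toFinset, mem_roots h0]
    simp [IsRoot.def, ← map_pow, FiniteField.pow_card]
  have h2 := Finset.eq_of_subset_of_card_le h1 (by
    rw [Finset.card_image_of_injective _ j.injective, Finset.card_univ]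
    refine (Multiset.toFinset_card_le _).trans ((card_roots' _).trans ?_)
    rw [FiniteField.X_pow_card_sub_X_natDegree_eq L Fintype.one_lt_card])
  have h3 : z ∈ (X ^ Fintype.card K - X : L[X]).roots.toFinset := by
    rw [Multiset.mem_toFinset, mem_roots h0]
    simp [IsRoot.def, hz]
  rw [← h2] at h3
  obtain ⟨c, -, hc⟩ := Finset.mem_image.1 h3
  exact ⟨c, hc⟩

section diag

variable {F : Type*} [Field F] {m : ℕ} (f : (MvPolynomial (Fin m) F)[X])

/-- the divided difference -/
noncomputable def gg : BB f :=
  ∑ k ∈ Finset.range (f.natDegree + 1),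
    AdjoinRoot.of (fU f) (MvPolynomial.C (AdjoinRoot.of f (f.coeff k))) *
      ∑ i ∈ Finset.range k, AdjoinRoot.root (fU f) ^ i *
        AdjoinRoot.of (fU f) (MvPolynomial.C (AdjoinRoot.root f)) ^ (k - 1 - i)

variable {f}

lemma bhom_gg {A : Type*} [CommRing A] (u : AdjoinRoot f →+* A) (t : Fin m → A) (w : A)
    (h : f.eval₂ (MvPolynomial.eval₂Hom (u.comp (sc f)) t) w = 0) :
    bhom u t w h (gg f) = ∑ k ∈ Finset.range (f.natDegree + 1),
      u (AdjoinRoot.of f (f.coeff k)) * ∑ i ∈ Finset.range k, w ^ i *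
        u (AdjoinRoot.root f) ^ (k - 1 - i) := by
  simp only [gg, map_sum, map_mul, map_pow, bhom_of, bhom_root, MvPolynomial.coe_eval₂Hom,
    MvPolynomial.eval₂_C]

lemma bhom_gg_mul {A : Type*} [CommRing A] (u : AdjoinRoot f →+* A) (t : Fin m → A) (w : A)
    (h : f.eval₂ (MvPolynomial.eval₂Hom (u.comp (sc f)) t) w = 0) :
    bhom u t w h (gg f) * (w - u (AdjoinRoot.root f)) =
      f.eval₂ (u.comp (AdjoinRoot.of f)) w := by
  rw [bhom_gg, Finset.sum_mul]
  simp_rw [mul_assoc, geom_sum₂_mul, mul_sub]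
  rw [Finset.sum_sub_distrib]
  have h1 : ∀ z : A, f.eval₂ (u.comp (AdjoinRoot.of f)) z =
      ∑ k ∈ Finset.range (f.natDegree + 1), u (AdjoinRoot.of f (f.coeff k)) * z ^ k := by
    intro z
    rw [eval₂_eq_sum_range]; rfl
  rw [← h1, ← h1, ← Polynomial.hom_eval₂, AdjoinRoot.eval₂_root, map_zero, sub_zero]

/-- restriction to the diagonal -/
noncomputable def piB (f : (MvPolynomial (Fin m) F)[X]) : BB f →+* AdjoinRoot f :=
  bhom (RingHom.id _) (xx f) (AdjoinRoot.root f) (by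
    rw [RingHom.id_comp]; exact eval₂_root)

lemma piB_gg : piB f (gg f) = AdjoinRoot.mk f (derivative f) := by
  rw [piB, bhom_gg]
  simp only [RingHom.id_apply]
  rw [← AdjoinRoot.aeval_eq, Polynomial.aeval_def, AdjoinRoot.algebraMap_eq,
    ← Polynomial.eval_map, ← Polynomial.derivative_map, Polynomial.derivative_eval,
    Polynomial.sum_over_range' _ _ (f.natDegree + 1)]
  · refine Finset.sum_congr rfl fun k _ => ?_
    rw [mul_assoc, coeff_map]
    congr 1
    have : ∀ i ∈ Finset.range k, AdjoinRoot.root f ^ i * AdjoinRoot.root f ^ (k - 1 - i)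
      = AdjoinRoot.root f ^ (k - 1) := by
      intro i hi
      rw [← pow_add]; congr 1
      have := Finset.mem_range.1 hi
      omega
    rw [Finset.sum_congr rfl this]
    simp
  · exact Nat.lt_succ_of_le (natDegree_map_le)
  · intro n; simp

lemma piB_gg_ne (hf : f.Monic) (hder : derivative f ≠ 0) : piB f (gg f) ≠ 0 := by
  rw [piB_gg]
  refine AdjoinRoot.mk_ne_zero_of_degree_lt hf hder ?_
  exact degree_derivative_lt (hf.ne_zero)

variable {K : Type*} [Field K] [Fintype K] [Algebra K F]

lemma frob_root (fK : (MvPolynomial (Fin m) K)[X])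
    (hfK : f = fK.map (MvPolynomial.map (algebraMap K F))) :
    f.eval₂ (MvPolynomial.eval₂Hom ((RingHom.id _).comp (sc f))
      (fun i => xx f i ^ Fintype.card K)) (AdjoinRoot.root f ^ Fintype.card K) = 0 := by
  have hsc : ∀ c : K, sc f (algebraMap K F c) = algebraMap K (AdjoinRoot f) c := by
    intro c
    rfl
  have h1 := congrArg (FiniteField.frobeniusAlgHom K (AdjoinRoot f) : AdjoinRoot f →+* AdjoinRoot f)
    (AdjoinRoot.eval₂_root f)
  rw [Polynomial.hom_eval₂, map_zero] at h1
  have h2 : ((FiniteField.frobeniusAlgHom K (AdjoinRoot f) : AdjoinRoot f →+* AdjoinRoot f)).comp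
      ((AdjoinRoot.of f).comp (MvPolynomial.map (algebraMap K F))) =
      (MvPolynomial.eval₂Hom ((RingHom.id _).comp (sc f))
        (fun i => xx f i ^ Fintype.card K)).comp (MvPolynomial.map (algebraMap K F)) := by
    apply MvPolynomial.ringHom_ext
    · intro c
      have h3 : AdjoinRoot.of f (MvPolynomial.C (algebraMap K F c)) =
        sc f (algebraMap K F c) := rfl
      simp only [RingHom.comp_apply, MvPolynomial.map_C, MvPolynomial.coe_eval₂Hom,
        MvPolynomial.eval₂_C, RingHom.id_apply, h3, hsc]
      exact AlgHom.commutes (FiniteField.frobeniusAlgHom K (AdjoinRoot f)) c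
    · intro i
      simp [xx]
  have h4 : ∀ (h h' : MvPolynomial (Fin m) F →+* AdjoinRoot f) (w : AdjoinRoot f),
      h.comp (MvPolynomial.map (algebraMap K F)) = h'.comp (MvPolynomial.map (algebraMap K F)) →
      f.eval₂ h w = 0 → f.eval₂ h' w = 0 := by
    intro h h' w e e1
    have e2 : ∀ g : (MvPolynomial (Fin m) F)[X], g = fK.map (MvPolynomial.map (algebraMap K F)) →
       g.eval₂ h w = g.eval₂ h' w := by
      rintro g rfl
      rw [Polynomial.eval₂_map, Polynomial.eval₂_map, e]
    rw [← e2 f hfK]; exact e1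
  refine h4 _ _ _ ?_ h1
  rw [RingHom.comp_assoc]
  exact h2

/-- the Frobenius graph -/
noncomputable def phi (q : ℕ) (h : f.eval₂ (MvPolynomial.eval₂Hom ((RingHom.id _).comp (sc f))
      (fun i => xx f i ^ q)) (AdjoinRoot.root f ^ q) = 0) : BB f →+* AdjoinRoot f :=
  bhom (RingHom.id _) (fun i => xx f i ^ q) (AdjoinRoot.root f ^ q) h

lemma sup_eq_top (fK : (MvPolynomial (Fin m) K)[X])
    (hfK : f = fK.map (MvPolynomial.map (algebraMap K F)))
    (hno : ∀ (x : Fin m → K) (y : K), (fK.map (MvPolynomial.eval x)).eval y ≠ 0) :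
    (IZ F m (Fintype.card K)).map (AdjoinRoot.of f) ⊔
      Ideal.span {AdjoinRoot.root f ^ Fintype.card K - AdjoinRoot.root f} = ⊤ := by
  by_contra hne
  obtain ⟨M, hM, hle⟩ := Ideal.exists_le_maximal _ hne
  letI : Field (AdjoinRoot f ⧸ M) := Ideal.Quotient.field M
  let j : K →+* AdjoinRoot f ⧸ M := (Ideal.Quotient.mk M).comp ((sc f).comp (algebraMap K F))
  have h1 : ∀ i, ∃ c, j c = Ideal.Quotient.mk M (xx f i) := by
    intro i
    apply fixed_point
    rw [← map_pow, ← sub_eq_zero, ← map_sub, Ideal.Quotient.eq_zero_iff_mem]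
    apply hle
    apply Ideal.mem_sup_left
    have : xx f i ^ Fintype.card K - xx f i =
      AdjoinRoot.of f (MvPolynomial.X i ^ Fintype.card K - MvPolynomial.X i) := by simp [xx]
    rw [this]
    exact Ideal.mem_map_of_mem _ (Ideal.subset_span ⟨i, rfl⟩)
  have h2 : ∃ c, j c = Ideal.Quotient.mk M (AdjoinRoot.root f) := by
    apply fixed_point
    rw [← map_pow, ← sub_eq_zero, ← map_sub, Ideal.Quotient.eq_zero_iff_mem]
    apply hle
    exact Ideal.mem_sup_right (Ideal.subset_span rfl)
  choose x hx using h1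
  obtain ⟨y, hy⟩ := h2
  apply hno x y
  apply j.injective
  rw [map_zero, Polynomial.eval_map, Polynomial.hom_eval₂, hy]
  have h3 := congrArg (Ideal.Quotient.mk M) (AdjoinRoot.eval₂_root f)
  rw [Polynomial.hom_eval₂, map_zero] at h3
  have e2 : ∀ (g : (MvPolynomial (Fin m) F)[X]) (h : MvPolynomial (Fin m) F →+* AdjoinRoot f ⧸ M)
      (w : AdjoinRoot f ⧸ M), g = fK.map (MvPolynomial.map (algebraMap K F)) →
       g.eval₂ h w = fK.eval₂ (h.comp (MvPolynomial.map (algebraMap K F))) w := by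
      rintro g h w rfl
      rw [Polynomial.eval₂_map]
  rw [e2 f _ _ hfK] at h3
  rw [← h3]
  congr 1
  apply MvPolynomial.ringHom_ext
  · intro c
    simp [j, sc]
  · intro i
    simpa [xx] using hx i

lemma phi_gg_mem (fK : (MvPolynomial (Fin m) K)[X])
    (hfK : f = fK.map (MvPolynomial.map (algebraMap K F)))
    (hno : ∀ (x : Fin m → K) (y : K), (fK.map (MvPolynomial.eval x)).eval y ≠ 0) :
    phi (Fintype.card K) (frob_root fK hfK) (gg f) ∈
      (IZ F m (Fintype.card K)).map (AdjoinRoot.of f) := by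
  set q := Fintype.card K with hq
  set J := (IZ F m q).map (AdjoinRoot.of f) with hJ
  have h1 := bhom_gg_mul (RingHom.id _) (fun i => xx f i ^ q) (AdjoinRoot.root f ^ q)
    (frob_root fK hfK)
  have h2 : f.eval₂ ((RingHom.id _).comp (AdjoinRoot.of f)) (AdjoinRoot.root f ^ q) ∈ J := by
    rw [← Ideal.Quotient.eq_zero_iff_mem, Polynomial.hom_eval₂]
    have h3 := congrArg (Ideal.Quotient.mk J) (frob_root fK hfK)
    rw [Polynomial.hom_eval₂, map_zero] at h3
    rw [← h3]
    congr 1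
    apply MvPolynomial.ringHom_ext
    · intro c
      simp [sc]
    · intro i
      simp only [RingHom.id_comp, RingHom.comp_apply, MvPolynomial.coe_eval₂Hom,
        MvPolynomial.eval₂_X]
      symm
      rw [← sub_eq_zero, ← map_sub, Ideal.Quotient.eq_zero_iff_mem]
      have : xx f i ^ Fintype.card K - AdjoinRoot.of f (MvPolynomial.X i) =
        AdjoinRoot.of f (MvPolynomial.X i ^ Fintype.card K - MvPolynomial.X i) := by simp [xx]
      rw [this]
      exact Ideal.mem_map_of_mem _ (Ideal.subset_span ⟨i, rfl⟩)
  rw [← h1] at h2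
  have h4 := sup_eq_top fK hfK hno
  rw [Ideal.eq_top_iff_one, Submodule.mem_sup] at h4
  obtain ⟨a, ha, b, hb, hab⟩ := h4
  obtain ⟨c, rfl⟩ := Ideal.mem_span_singleton'.1 hb
  have h5 : phi q (frob_root fK hfK) (gg f) = phi q (frob_root fK hfK) (gg f) * a +
      c * (phi q (frob_root fK hfK) (gg f) * (AdjoinRoot.root f ^ q - AdjoinRoot.root f)) := by
    linear_combination (- phi q (frob_root fK hfK) (gg f)) * hab
  rw [h5]
  exact J.add_mem (J.mul_mem_left _ ha) (J.mul_mem_left _ h2)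

end diag

end LW

namespace LW

open Polynomial

lemma co_of_pow {Q : Type*} [CommRing Q] {f : Q[X]} (hf : f.Monic) (r : Q) {i j : ℕ}
    (hi : i < f.natDegree) (hj : j < f.natDegree) :
    co hf i (AdjoinRoot.of f r * AdjoinRoot.root f ^ j) = if i = j then r else 0 := by
  have h := co_sum hf (fun k => if k = j then r else 0) hi
  rw [← h]
  congr 1
  rw [Finset.sum_eq_single j]
  · simp
  · intro b _ hb; simp [hb]
  · intro hj'; exact absurd (Finset.mem_range.2 hj) hj'

section shift

variable {F : Type*} [Field F] {m : ℕ} (f : (MvPolynomial (Fin m) F)[X])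

/-- the shift -/
noncomputable def sh : ST f →+* ST f :=
  MvPolynomial.eval₂Hom MvPolynomial.C (fun i => MvPolynomial.X i + MvPolynomial.C (xx f i))

/-- the inverse shift -/
noncomputable def shi : ST f →+* ST f :=
  MvPolynomial.eval₂Hom MvPolynomial.C (fun i => MvPolynomial.X i - MvPolynomial.C (xx f i))

variable {f}

lemma sh_C (s : AdjoinRoot f) : sh f (MvPolynomial.C s) = MvPolynomial.C s := by simp [sh]

lemma sh_shi (p : ST f) : sh f (shi f p) = p := by
  have : (sh f).comp (shi f) = RingHom.id _ := by
    apply MvPolynomial.ringHom_ext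
    · intro r; simp [sh, shi]
    · intro i; simp [sh, shi]
  exact congrArg (fun h : ST f →+* ST f => h p) this

lemma shi_C (s : AdjoinRoot f) : shi f (MvPolynomial.C s) = MvPolynomial.C s := by simp [shi]

lemma eval_sh (t : Fin m → AdjoinRoot f) (p : ST f) :
    MvPolynomial.eval₂Hom (RingHom.id _) t p =
      MvPolynomial.eval₂Hom (RingHom.id _) (fun i => t i - xx f i) (sh f p) := by
  have : (MvPolynomial.eval₂Hom (RingHom.id _) t : ST f →+* AdjoinRoot f) =
      (MvPolynomial.eval₂Hom (RingHom.id _) (fun i => t i - xx f i)).comp (sh f) := by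
    apply MvPolynomial.ringHom_ext
    · intro r; simp [sh]
    · intro i; simp [sh]
  exact congrArg (fun h : ST f →+* AdjoinRoot f => h p) this

lemma prod_mem_pow {A ι : Type*} [CommRing A] (J : Ideal A) (z : ι → A) (hz : ∀ i, z i ∈ J)
    (t : Finset ι) (k : ι → ℕ) : ∏ i ∈ t, z i ^ k i ∈ J ^ (∑ i ∈ t, k i) := by
  classical
  induction t using Finset.induction_on with
  | empty => simp
  | insert i t hi ih =>
    rw [Finset.prod_insert hi, Finset.sum_insert hi, pow_add]
    exact Ideal.mul_mem_mul (Ideal.pow_mem_pow (hz i) _) ih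

lemma eval_mem_pow {A : Type*} [CommRing A] (J : Ideal A) (z : Fin m → A) (hz : ∀ i, z i ∈ J)
    (M : ℕ) (p : MvPolynomial (Fin m) A)
    (hp : ∀ α : Fin m →₀ ℕ, α.degree < M → MvPolynomial.coeff α p = 0) :
    MvPolynomial.eval₂Hom (RingHom.id _) z p ∈ J ^ M := by
  rw [MvPolynomial.coe_eval₂Hom, MvPolynomial.eval₂_eq']
  refine Ideal.sum_mem _ fun α hα => Ideal.mul_mem_left _ _ ?_
  have h1 : M ≤ α.degree := by
    by_contra! h
    exact (MvPolynomial.mem_support_iff.1 hα) (hp α h)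
  refine Ideal.pow_le_pow_right h1 ?_
  rw [Finsupp.degree_eq_sum]
  exact prod_mem_pow J z hz _ _

lemma phi_mem_pow (hf : f.Monic) {q : ℕ} (h : f.eval₂ (MvPolynomial.eval₂Hom
      ((RingHom.id _).comp (sc f)) (fun i => xx f i ^ q)) (AdjoinRoot.root f ^ q) = 0)
    (M : ℕ) (D : BB f) (hD : ∀ j < (fU f).natDegree, ∀ α : Fin m →₀ ℕ, α.degree < M →
      MvPolynomial.coeff α (sh f (co (fU_monic hf) j D)) = 0) :
    phi q h D ∈ ((IZ F m q).map (AdjoinRoot.of f)) ^ M := by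
  rw [co_repr (fU_monic hf) D, map_sum]
  refine Ideal.sum_mem _ fun j hj => ?_
  rw [map_mul]
  refine Ideal.mul_mem_right _ _ ?_
  rw [phi, bhom_of, eval_sh]
  refine eval_mem_pow _ _ ?_ _ _ (hD j (Finset.mem_range.1 hj))
  intro i
  have : xx f i ^ q - xx f i =
    AdjoinRoot.of f (MvPolynomial.X i ^ q - MvPolynomial.X i) := by simp [xx]
  rw [this]
  exact Ideal.mem_map_of_mem _ (Ideal.subset_span ⟨i, rfl⟩)

lemma coeff_mul_zero {A : Type*} [CommRing A] [IsDomain A] (M : ℕ) (G Z : MvPolynomial (Fin m) A)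
    (hG : MvPolynomial.coeff 0 G ≠ 0)
    (h : ∀ α : Fin m →₀ ℕ, α.degree < M → MvPolynomial.coeff α (G * Z) = 0) :
    ∀ α : Fin m →₀ ℕ, α.degree < M → MvPolynomial.coeff α Z = 0 := by
  classical
  have key : ∀ n : ℕ, ∀ α : Fin m →₀ ℕ, α.degree = n → α.degree < M →
      MvPolynomial.coeff α Z = 0 := by
    intro n
    induction n using Nat.strong_induction_on with
    | _ n ih =>
      intro α hα hM
      have h1 := h α hM
      rw [MvPolynomial.coeff_mul, Finset.sum_eq_single (0, α)] at h1
      · exact (mul_eq_zero.1 h1).resolve_left hG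
      · rintro ⟨β, γ⟩ hb hne
        have hb := Finset.HasAntidiagonal.mem_antidiagonal.1 hb
        simp only at hb
        have hdeg : α.degree = β.degree + γ.degree := by rw [← hb, map_add]
        have hβ : β ≠ 0 := by
          rintro rfl
          rw [zero_add] at hb
          exact hne (by rw [hb])
        have hβ' : β.degree ≠ 0 := by
          intro h0; exact hβ ((Finsupp.degree_eq_zero_iff β).1 h0)
        rw [ih γ.degree (by omega) γ rfl (by omega), mul_zero]
      · intro hn; exact absurd (Finset.HasAntidiagonal.mem_antidiagonal.2 (zero_add _)) hn
  exact fun α hα => key _ α rfl hα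

/-- Basic elements of `S`. -/
noncomputable def el (f : (MvPolynomial (Fin m) F)[X]) (γ : Fin m →₀ ℕ) (i : ℕ) (c : F) :
    AdjoinRoot f :=
  AdjoinRoot.of f (MvPolynomial.monomial γ c) * AdjoinRoot.root f ^ i

lemma el_add (γ : Fin m →₀ ℕ) (i : ℕ) (c c' : F) : el f γ i (c + c') = el f γ i c + el f γ i c' := by
  simp [el, add_mul]

lemma el_smul (γ : Fin m →₀ ℕ) (i : ℕ) (c c' : F) : el f γ i (c * c') = sc f c * el f γ i c' := by
  rw [el, el, sc, RingHom.comp_apply, ← mul_assoc, ← map_mul, MvPolynomial.C_mul_monomial]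

lemma coeff_el (hf : f.Monic) (γ γ' : Fin m →₀ ℕ) {i j : ℕ} (c : F) (hi : i < f.natDegree)
    (hj : j < f.natDegree) :
    MvPolynomial.coeff γ (co hf i (el f γ' j c)) = if γ = γ' ∧ i = j then c else 0 := by
  classical
  rw [el, co_of_pow hf _ hi hj]
  by_cases h : i = j
  · simp [h, MvPolynomial.coeff_monomial, eq_comm]
  · simp [h]

lemma monomial_degree_le (γ : Fin m →₀ ℕ) (c : F) :
    (MvPolynomial.monomial γ c).totalDegree ≤ γ.degree := by
  refine (MvPolynomial.totalDegree_monomial_le γ c).trans (le_of_eq ?_)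
  rfl

lemma el_level (hf : f.Monic) (hpos : 0 < f.natDegree) {d : ℕ}
    (hd : ∀ i, f.coeff i ∈ (Filt.tdeg (Fin m) F).G d) (γ : Fin m →₀ ℕ) (i : ℕ) (c : F) :
    el f γ i c ∈ ((Filt.tdeg (Fin m) F).adj hf hpos hd).G (γ.degree + i * d) := by
  have h1 := (Filt.tdeg (Fin m) F).adjG_root_pow_mul hf hpos hd
    ((Filt.tdeg (Fin m) F).adjG_one hf hpos) i
  rw [mul_one] at h1
  have h2 := (Filt.tdeg (Fin m) F).adjG_of_mul hf
    (show MvPolynomial.monomial γ c ∈ (Filt.tdeg (Fin m) F).G γ.degree from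
      monomial_degree_le γ c) h1
  refine Filt.mono _ ?_ h2
  change γ.degree + (0 + i * (d + 0)) + 0 ≤ _
  simp

end shift

end LW

namespace LW

open Polynomial

section levels

variable {F : Type*} [Field F] {m : ℕ} {f : (MvPolynomial (Fin m) F)[X]}

/-- filtration on `S` -/
noncomputable def PhiS (hf : f.Monic) (hpos : 0 < f.natDegree) {d : ℕ}
    (hd : ∀ i, f.coeff i ∈ (Filt.tdeg (Fin m) F).G d) : Filt (AdjoinRoot f) :=
  (Filt.tdeg (Fin m) F).adj hf hpos hd

variable (hf : f.Monic) (hpos : 0 < f.natDegree) {d : ℕ}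
    (hd : ∀ i, f.coeff i ∈ (Filt.tdeg (Fin m) F).G d)

lemma PhiS_c : (PhiS hf hpos hd).c = f.natDegree * d := by
  change 0 + f.natDegree * (d + 0) = _
  simp

lemma el_lev (γ : Fin m →₀ ℕ) (i : ℕ) (c : F) :
    el f γ i c ∈ (PhiS hf hpos hd).G (γ.degree + i * d) := el_level hf hpos hd γ i c

/-- filtration via shifted coefficients -/
noncomputable def PhiT : Filt (ST f) := ((PhiS hf hpos hd).mvc (Fin m)).comap (sh f)

lemma PhiT_c : (PhiT hf hpos hd).c = f.natDegree * d := PhiS_c hf hpos hd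

/-- filtration via coefficients -/
noncomputable def PhiU : Filt (ST f) := (PhiS hf hpos hd).mvc (Fin m)

lemma PhiU_c : (PhiU hf hpos hd).c = f.natDegree * d := PhiS_c hf hpos hd

lemma monomial_PhiU (β : Fin m →₀ ℕ) {s : AdjoinRoot f} {a : ℕ} (hs : s ∈ (PhiS hf hpos hd).G a) :
    MvPolynomial.monomial β s ∈ (PhiU hf hpos hd).G a := by
  classical
  intro α
  rw [MvPolynomial.coeff_monomial]
  split_ifs
  · exact hs
  · exact AddSubgroup.zero_mem _

lemma C_PhiT {s : AdjoinRoot f} {a : ℕ} (hs : s ∈ (PhiS hf hpos hd).G a) :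
    MvPolynomial.C s ∈ (PhiT hf hpos hd).G a := by
  rw [PhiT, Filt.mem_comap, sh_C]
  exact monomial_PhiU hf hpos hd 0 hs

lemma X_PhiT (i : Fin m) : MvPolynomial.X i ∈ (PhiT hf hpos hd).G 1 := by
  rw [PhiT, Filt.mem_comap]
  have : sh f (MvPolynomial.X i) = MvPolynomial.X i + MvPolynomial.C (xx f i) := by simp [sh]
  rw [this]
  refine AddSubgroup.add_mem _ ?_ ?_
  · exact Filt.mono _ (Nat.zero_le 1)
      (monomial_PhiU hf hpos hd (Finsupp.single i 1) (PhiS hf hpos hd).one)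
  · refine monomial_PhiU hf hpos hd 0 ?_
    have h := el_lev hf hpos hd (Finsupp.single i 1) 0 1
    have h2 : el f (Finsupp.single i 1) 0 1 = xx f i := by simp [el, xx, MvPolynomial.X]
    rw [h2] at h
    simpa using h

lemma monomial_PhiT (β : Fin m →₀ ℕ) {s : AdjoinRoot f} {a : ℕ}
    (hs : s ∈ (PhiS hf hpos hd).G a) :
    MvPolynomial.monomial β s ∈ (PhiT hf hpos hd).G (a + β.degree * (1 + f.natDegree * d)) := by
  have h := (PhiT hf hpos hd).prod_pow_mul_mem (fun i => MvPolynomial.X i)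
    (fun i => X_PhiT hf hpos hd i) (C_PhiT hf hpos hd hs) Finset.univ (fun i => β i)
  rw [PhiT_c, ← Finsupp.degree_eq_sum] at h
  convert h using 1
  rw [MvPolynomial.monomial_eq, mul_comm]
  congr 1
  rw [Finsupp.prod_fintype]
  intro i; simp

lemma tau_eq (r : MvPolynomial (Fin m) F) :
    tau f r = ∑ β ∈ r.support, MvPolynomial.monomial β (sc f (MvPolynomial.coeff β r)) := by
  conv_lhs => rw [MvPolynomial.as_sum r]
  rw [map_sum]
  refine Finset.sum_congr rfl fun β _ => ?_
  simp [tau]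

lemma sc_lev (c : F) : sc f c ∈ (PhiS hf hpos hd).G 0 := by
  have h := el_lev hf hpos hd 0 0 c
  have h2 : el f 0 0 c = sc f c := by
    rw [el, pow_zero, mul_one]; rfl
  rw [h2] at h
  simpa using h

/-- level of the coefficients -/
def d1 (e d : ℕ) : ℕ := d * (1 + e * d)

lemma fU_PhiT (k : ℕ) : (fU f).coeff k ∈ (PhiT hf hpos hd).G (d1 f.natDegree d) := by
  rw [fU, Polynomial.coeff_map, tau_eq]
  refine Filt.sum_mem _ _ _ _ fun β hβ => ?_
  refine Filt.mono _ ?_ (monomial_PhiT hf hpos hd β (sc_lev hf hpos hd _))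
  have h1 : β.degree ≤ d := (MvPolynomial.le_totalDegree hβ).trans (hd k)
  rw [zero_add, d1]
  exact Nat.mul_le_mul_right _ h1

lemma fU_PhiU (k : ℕ) : (fU f).coeff k ∈ (PhiU hf hpos hd).G 0 := by
  rw [fU, Polynomial.coeff_map, tau_eq]
  exact Filt.sum_mem _ _ _ _ fun β hβ => monomial_PhiU hf hpos hd β (sc_lev hf hpos hd _)

lemma fU_pos (hf : f.Monic) (hpos : 0 < f.natDegree) : 0 < (fU f).natDegree := by
  rw [fU_natDegree hf hpos]; exact hpos

lemma of_adjG {Q : Type*} [CommRing Q] (Φ : Filt Q) {f : Q[X]} (hf : f.Monic)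
    (hpos : 0 < f.natDegree) {p : Q} {a : ℕ} (hp : p ∈ Φ.G a) :
    AdjoinRoot.of f p ∈ Φ.adjG hf a := by
  intro i hi
  have := co_of_pow hf p hi hpos
  rw [pow_zero, mul_one] at this
  rw [this]
  split_ifs
  · exact hp
  · exact AddSubgroup.zero_mem _

/-- filtration on the double -/
noncomputable def PhiB : Filt (BB f) :=
  (PhiT hf hpos hd).adj (fU_monic hf) (fU_pos hf hpos) (fU_PhiT hf hpos hd)

/-- constant -/
def ww (e d : ℕ) : ℕ := e * (d1 e d + e * d)

lemma PhiB_c : (PhiB hf hpos hd).c = f.natDegree * d + ww f.natDegree d := by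
  change (PhiT hf hpos hd).c + (fU f).natDegree * (d1 f.natDegree d + (PhiT hf hpos hd).c) = _
  rw [PhiT_c, fU_natDegree hf hpos, ww]

lemma root_pow_lev {p : ST f} {a j : ℕ} (hp : p ∈ (PhiT hf hpos hd).G a) (hj : j ≤ f.natDegree) :
    AdjoinRoot.root (fU f) ^ j * AdjoinRoot.of (fU f) p ∈
      (PhiB hf hpos hd).G (a + ww f.natDegree d) := by
  have h := (PhiT hf hpos hd).adjG_root_pow_mul (fU_monic hf) (fU_pos hf hpos)
    (fU_PhiT hf hpos hd) (of_adjG (PhiT hf hpos hd) (fU_monic hf) (fU_pos hf hpos) hp) j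
  refine Filt.mono _ ?_ h
  rw [PhiT_c, ww]
  exact Nat.add_le_add_left (Nat.mul_le_mul_right _ hj) _

/-- level of `g` -/
def cg (e d : ℕ) : ℕ := d + e * d + ww e d

lemma gg_lev : gg f ∈ (PhiB hf hpos hd).G (cg f.natDegree d) := by
  rw [gg]
  refine Filt.sum_mem _ _ _ _ fun k hk => ?_
  rw [Finset.mul_sum]
  refine Filt.sum_mem _ _ _ _ fun i hi => ?_
  have hk := Finset.mem_range.1 hk
  have hi := Finset.mem_range.1 hi
  rw [mul_left_comm, ← map_pow, ← map_pow, ← map_mul, ← map_mul]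
  refine root_pow_lev hf hpos hd ?_ (by omega)
  apply C_PhiT
  have h1 := (Filt.tdeg (Fin m) F).adjG_root_pow_mul hf hpos hd
    ((Filt.tdeg (Fin m) F).adjG_one hf hpos) (k - 1 - i)
  rw [mul_one] at h1
  have h2 := (Filt.tdeg (Fin m) F).adjG_of_mul hf (hd k) h1
  refine Filt.mono _ ?_ h2
  change d + (0 + (k - 1 - i) * (d + 0)) + 0 ≤ _
  have : (k - 1 - i) * d ≤ f.natDegree * d := Nat.mul_le_mul_right _ (by omega)
  simpa using this

variable (f) in
/-- the auxiliary polynomial -/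
noncomputable def PP (A Kk : ℕ)
    (v : Idx m A × Idx m Kk × Fin f.natDegree × Fin f.natDegree → F) : BB f :=
  ∑ t, AdjoinRoot.of (fU f) (MvPolynomial.monomial t.2.1.1 (el f t.1.1 t.2.2.1 (v t))) *
    AdjoinRoot.root (fU f) ^ (t.2.2.2 : ℕ)

variable (f) in
/-- the correction term, before shifting -/
noncomputable def Z0 (A M : ℕ) (z : Idx m M × Idx m A × Fin f.natDegree → F) : ST f :=
  ∑ t, MvPolynomial.monomial t.1.1 (el f t.2.1.1 t.2.2 (z t))

/-- constant for P -/
def C1 (e d Kk : ℕ) : ℕ := e * d + Kk * (1 + e * d) + ww e d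

lemma PP_lev (A Kk : ℕ) (v) : PP f A Kk v ∈ (PhiB hf hpos hd).G (A + C1 f.natDegree d Kk) := by
  refine Filt.sum_mem _ _ _ _ fun t _ => ?_
  rw [mul_comm]
  refine Filt.mono _ ?_ (root_pow_lev hf hpos hd (monomial_PhiT hf hpos hd _
    (el_lev hf hpos hd _ _ _)) t.2.2.2.2.le)
  have h1 : (t.2.2.1 : ℕ) * d ≤ f.natDegree * d := Nat.mul_le_mul_right _ t.2.2.1.2.le
  have h2 := Nat.mul_le_mul_right (1 + f.natDegree * d) t.2.1.2.le
  have h3 := t.1.2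
  rw [C1]; omega

lemma ZZ_lev (A M : ℕ) (z) :
    shi f (Z0 f A M z) ∈ (PhiT hf hpos hd).G (A + f.natDegree * d) := by
  rw [PhiT, Filt.mem_comap, sh_shi]
  refine Filt.sum_mem _ _ _ _ fun t _ => ?_
  refine Filt.mono _ ?_ (monomial_PhiU hf hpos hd _ (el_lev hf hpos hd _ _ _))
  have h1 : (t.2.2 : ℕ) * d ≤ f.natDegree * d := Nat.mul_le_mul_right _ t.2.2.2.le
  have h3 := t.2.1.2
  omega

/-- the relation -/
noncomputable def DD (A Kk M : ℕ)
    (v : Idx m A × Idx m Kk × Fin f.natDegree × Fin f.natDegree → F)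
    (z : Idx m M × Idx m A × Fin f.natDegree → F) : BB f :=
  PP f A Kk v - AdjoinRoot.of (fU f) (shi f (Z0 f A M z)) * gg f ^ M

/-- total constant -/
def CC (e d Kk M : ℕ) : ℕ :=
  C1 e d Kk + M * (cg e d + (e * d + ww e d)) + e * d + e * d + ww e d + 1

lemma DD_lev (A Kk M : ℕ) (v z) :
    DD A Kk M v z ∈ (PhiB hf hpos hd).G (A + CC f.natDegree d Kk M - 1) := by
  refine AddSubgroup.sub_mem _ ?_ ?_
  · refine Filt.mono _ ?_ (PP_lev hf hpos hd A Kk v)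
    rw [CC]; omega
  · have h1 := (PhiB hf hpos hd).pow_mem (gg_lev hf hpos hd) M
    have h2 : AdjoinRoot.of (fU f) (shi f (Z0 f A M z)) ∈ (PhiB hf hpos hd).G _ :=
      of_adjG (PhiT hf hpos hd) (fU_monic hf) (fU_pos hf hpos) (ZZ_lev hf hpos hd A M z)
    refine Filt.mono _ ?_ (Filt.mul _ _ _ _ _ h2 h1)
    rw [PhiB_c, CC]
    omega

lemma DD_deg (hpos : 0 < f.natDegree)
    (hd : ∀ i, f.coeff i ∈ (Filt.tdeg (Fin m) F).G d) (A Kk M : ℕ) (v z) {i j : ℕ} (α : Fin m →₀ ℕ) (hi : i < f.natDegree)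
    (hj : j < (fU f).natDegree) :
    (co hf i (MvPolynomial.coeff α (sh f (co (fU_monic hf) j (DD A Kk M v z))))).totalDegree
      < A + CC f.natDegree d Kk M := by
  have h1 : (co hf i (MvPolynomial.coeff α (sh f (co (fU_monic hf) j
      (DD A Kk M v z))))).totalDegree ≤ A + CC f.natDegree d Kk M - 1 :=
    DD_lev hf hpos hd A Kk M v z j hj α i hi
  have : 0 < CC f.natDegree d Kk M := by rw [CC]; omega
  omega

end levels

end LW

namespace LW

open Polynomial

section core

variable {F : Type*} [Field F] {m : ℕ} {f : (MvPolynomial (Fin m) F)[X]}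

/-- coordinate functional -/
noncomputable def lam (hf : f.Monic) (γ : Fin m →₀ ℕ) (i : ℕ) (α : Fin m →₀ ℕ) (j : ℕ)
    (b : BB f) : F :=
  MvPolynomial.coeff γ (co hf i (MvPolynomial.coeff α (sh f (co (fU_monic hf) j b))))

lemma lam_add (hf : f.Monic) (γ : Fin m →₀ ℕ) (i : ℕ) (α : Fin m →₀ ℕ) (j : ℕ)
    (b b' : BB f) : lam hf γ i α j (b + b') = lam hf γ i α j b + lam hf γ i α j b' := by
  simp only [lam, map_add, MvPolynomial.coeff_add]

lemma lam_smul (hf : f.Monic) (γ : Fin m →₀ ℕ) (i : ℕ) (α : Fin m →₀ ℕ) (j : ℕ)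
    (c : F) (b : BB f) :
    lam hf γ i α j (AdjoinRoot.of (fU f) (MvPolynomial.C (sc f c)) * b) =
      c * lam hf γ i α j b := by
  rw [lam, lam, co_of_mul, map_mul, sh_C, MvPolynomial.coeff_C_mul, sc, RingHom.comp_apply,
    co_of_mul, MvPolynomial.coeff_C_mul]

lemma PP_add (A Kk : ℕ) (v v') : PP f A Kk (v + v') = PP f A Kk v + PP f A Kk v' := by
  simp only [PP, Pi.add_apply, el_add, map_add, add_mul, Finset.sum_add_distrib]

lemma PP_smul (A Kk : ℕ) (c : F) (v) : PP f A Kk (c • v) =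
    AdjoinRoot.of (fU f) (MvPolynomial.C (sc f c)) * PP f A Kk v := by
  simp only [PP, Pi.smul_apply, smul_eq_mul, el_smul, ← MvPolynomial.C_mul_monomial, map_mul,
    mul_assoc, Finset.mul_sum]

lemma Z0_add (A M : ℕ) (v v') : Z0 f A M (v + v') = Z0 f A M v + Z0 f A M v' := by
  simp only [Z0, Pi.add_apply, el_add, map_add, Finset.sum_add_distrib]

lemma Z0_smul (A M : ℕ) (c : F) (v) : Z0 f A M (c • v) =
    MvPolynomial.C (sc f c) * Z0 f A M v := by
  simp only [Z0, Pi.smul_apply, smul_eq_mul, el_smul, ← MvPolynomial.C_mul_monomial,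
    Finset.mul_sum]

lemma DD_add (A Kk M : ℕ) (v v' z z') :
    DD (f := f) A Kk M (v + v') (z + z') = DD A Kk M v z + DD A Kk M v' z' := by
  simp only [DD, PP_add, Z0_add, map_add]; ring

lemma DD_smul (A Kk M : ℕ) (c : F) (v z) :
    DD (f := f) A Kk M (c • v) (c • z) =
      AdjoinRoot.of (fU f) (MvPolynomial.C (sc f c)) * DD A Kk M v z := by
  simp only [DD, PP_smul, Z0_smul, map_mul, shi_C]; ring

/-- the linear map -/
noncomputable def LL (hf : f.Monic) (A Kk M A' : ℕ) :
    ((Idx m A × Idx m Kk × Fin f.natDegree × Fin f.natDegree → F) ×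
      (Idx m M × Idx m A × Fin f.natDegree → F)) →ₗ[F]
    (Idx m A' × Fin f.natDegree × Idx m M × Fin f.natDegree → F) where
  toFun w := fun t => lam hf t.1.1 t.2.1 t.2.2.1.1 t.2.2.2 (DD A Kk M w.1 w.2)
  map_add' w w' := by
    ext t
    simp only [Prod.fst_add, Prod.snd_add, DD_add, lam_add, Pi.add_apply]
  map_smul' c w := by
    ext t
    simp only [Prod.smul_fst, Prod.smul_snd, DD_smul, lam_smul, Pi.smul_apply, smul_eq_mul,
      RingHom.id_apply]

lemma exists_DD (hf : f.Monic) (hpos : 0 < f.natDegree) {d : ℕ}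
    (hd : ∀ i, f.coeff i ∈ (Filt.tdeg (Fin m) F).G d) (A Kk M : ℕ)
    (hdim : cnt m (A + CC f.natDegree d Kk M) * (f.natDegree * (cnt m M * f.natDegree)) <
      cnt m A * (cnt m Kk * (f.natDegree * f.natDegree)) +
        cnt m M * (cnt m A * f.natDegree)) :
    ∃ v z, (v, z) ≠ 0 ∧ ∀ j < (fU f).natDegree, ∀ α : Fin m →₀ ℕ, α.degree < M →
      MvPolynomial.coeff α (sh f (co (fU_monic hf) j (DD A Kk M v z))) = 0 := by
  have h1 : LinearMap.ker (LL hf A Kk M (A + CC f.natDegree d Kk M)) ≠ ⊥ := by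
    apply LinearMap.ker_ne_bot_of_finrank_lt
    rw [Module.finrank_prod, Module.finrank_fintype_fun_eq_card,
      Module.finrank_fintype_fun_eq_card, Module.finrank_fintype_fun_eq_card]
    simp only [Fintype.card_prod, Fintype.card_fin]
    exact hdim
  obtain ⟨⟨v, z⟩, hw, hne⟩ := Submodule.exists_mem_ne_zero_of_ne_bot h1
  refine ⟨v, z, hne, fun j hj α hα => ?_⟩
  refine co_ext hf fun i hi => ?_
  rw [map_zero]
  ext γ
  rw [MvPolynomial.coeff_zero]
  by_cases hγ : γ.degree < A + CC f.natDegree d Kk M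
  · have h2 := congrFun (LinearMap.mem_ker.1 hw) (⟨γ, hγ⟩, ⟨i, hi⟩, ⟨α, hα⟩,
      ⟨j, by rwa [fU_natDegree hf hpos] at hj⟩)
    exact h2
  · apply MvPolynomial.coeff_eq_zero_of_totalDegree_lt
    have := DD_deg hf hpos hd A Kk M v z α hi hj
    rw [← Finsupp.degree_apply]
    omega

lemma coeff_PP (hf : f.Monic) (hpos : 0 < f.natDegree) (A Kk : ℕ) (v) (t) :
    MvPolynomial.coeff t.1.1 (co hf t.2.2.1 (MvPolynomial.coeff t.2.1.1
      (co (fU_monic hf) t.2.2.2 (PP f A Kk v)))) = v t := by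
  classical
  have he := fU_natDegree hf hpos
  simp only [PP, map_sum, MvPolynomial.coeff_sum]
  rw [Finset.sum_eq_single t]
  · rw [co_of_pow _ _ (by rw [he]; exact t.2.2.2.2) (by rw [he]; exact t.2.2.2.2), if_pos rfl,
      MvPolynomial.coeff_monomial, if_pos rfl, coeff_el hf _ _ _ t.2.2.1.2 t.2.2.1.2,
      if_pos ⟨rfl, rfl⟩]
  · intro s _ hs
    rw [co_of_pow _ _ (by rw [he]; exact t.2.2.2.2) (by rw [he]; exact s.2.2.2.2)]
    by_cases h1 : (t.2.2.2 : ℕ) = s.2.2.2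
    · rw [if_pos h1, MvPolynomial.coeff_monomial]
      by_cases h2 : s.2.1.1 = t.2.1.1
      · rw [if_pos h2, coeff_el hf _ _ _ t.2.2.1.2 s.2.2.1.2, if_neg]
        rintro ⟨h3, h4⟩
        apply hs
        obtain ⟨s1, s2, s3, s4⟩ := s
        obtain ⟨t1, t2, t3, t4⟩ := t
        simp only [Prod.mk.injEq]
        exact ⟨Subtype.ext h3.symm, Subtype.ext h2, Fin.ext h4.symm, Fin.ext h1.symm⟩
      · rw [if_neg h2]; simp
    · rw [if_neg h1]; simp
  · intro h; exact absurd (Finset.mem_univ _) h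

lemma PP_ne (hf : f.Monic) (hpos : 0 < f.natDegree) (A Kk : ℕ) (v) (hv : v ≠ 0) :
    PP f A Kk v ≠ 0 := by
  intro h
  apply hv
  ext t
  rw [← coeff_PP hf hpos A Kk v t, h]
  simp

lemma coeff_Z0 (hf : f.Monic) (A M : ℕ) (z) (t) :
    MvPolynomial.coeff t.2.1.1 (co hf t.2.2 (MvPolynomial.coeff t.1.1 (Z0 f A M z))) = z t := by
  classical
  simp only [Z0, map_sum, MvPolynomial.coeff_sum]
  rw [Finset.sum_eq_single t]
  · rw [MvPolynomial.coeff_monomial, if_pos rfl, coeff_el hf _ _ _ t.2.2.2 t.2.2.2,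
      if_pos ⟨rfl, rfl⟩]
  · intro s _ hs
    rw [MvPolynomial.coeff_monomial]
    by_cases h2 : s.1.1 = t.1.1
    · rw [if_pos h2, coeff_el hf _ _ _ t.2.2.2 s.2.2.2, if_neg]
      rintro ⟨h3, h4⟩
      apply hs
      obtain ⟨s1, s2, s3⟩ := s
      obtain ⟨t1, t2, t3⟩ := t
      simp only [Prod.mk.injEq]
      exact ⟨Subtype.ext h2, Subtype.ext h3.symm, Fin.ext h4.symm⟩
    · rw [if_neg h2]; simp
  · intro h; exact absurd (Finset.mem_univ _) h

lemma piB_repr (hf : f.Monic) (b : BB f) :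
    piB f b = ∑ j ∈ Finset.range (fU f).natDegree,
      MvPolynomial.coeff 0 (sh f (co (fU_monic hf) j b)) * AdjoinRoot.root f ^ j := by
  conv_lhs => rw [co_repr (fU_monic hf) b]
  rw [map_sum]
  refine Finset.sum_congr rfl fun j _ => ?_
  rw [map_mul, map_pow, piB, bhom_of, bhom_root, eval_sh]
  congr 1
  simp only [sub_self]
  rw [MvPolynomial.coe_eval₂Hom, ← MvPolynomial.constantCoeff_eq]
  exact MvPolynomial.eval₂_zero_apply _ _

lemma v_ne_zero (hf : f.Monic) [IsDomain (AdjoinRoot f)] (hder : derivative f ≠ 0)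
    (A Kk M : ℕ) (v z)
    (hne : (v, z) ≠ 0) (h : ∀ j < (fU f).natDegree, ∀ α : Fin m →₀ ℕ, α.degree < M →
      MvPolynomial.coeff α (sh f (co (fU_monic hf) j (DD A Kk M v z))) = 0) : v ≠ 0 := by
  rintro rfl
  have h1 : ∃ j < (fU f).natDegree,
      MvPolynomial.coeff 0 (sh f (co (fU_monic hf) j (gg f ^ M))) ≠ 0 := by
    by_contra! hc
    have h2 := piB_repr hf (gg f ^ M)
    rw [Finset.sum_eq_zero (fun j hj => by rw [hc j (Finset.mem_range.1 hj), zero_mul]),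
      map_pow] at h2
    exact pow_ne_zero M (piB_gg_ne hf hder) h2
  obtain ⟨j, hj, hj0⟩ := h1
  have h3 : PP f A Kk 0 = 0 := by
    have := PP_smul (f := f) A Kk 0 0
    simpa using this
  have h4 : ∀ α : Fin m →₀ ℕ, α.degree < M → MvPolynomial.coeff α (Z0 f A M z) = 0 := by
    refine coeff_mul_zero M _ _ hj0 fun α hα => ?_
    have := h j hj α hα
    rw [DD, h3, zero_sub, map_neg, map_neg, MvPolynomial.coeff_neg, neg_eq_zero, co_of_mul,
      map_mul, sh_shi, mul_comm] at this
    exact this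
  apply hne
  rw [Prod.mk_eq_zero]
  refine ⟨rfl, ?_⟩
  ext t
  rw [← coeff_Z0 hf A M z t, h4 _ t.1.2]
  simp

end core

end LW

namespace LW

open Polynomial

section core2

variable {F : Type*} [Field F] {m : ℕ} {f : (MvPolynomial (Fin m) F)[X]}

lemma eval_frob_ne (hf : f.Monic) {q : ℕ} (N : ST f) (hN : N ≠ 0)
    (hlev : ∀ β, ∀ i < f.natDegree, (co hf i (MvPolynomial.coeff β N)).totalDegree < q) :
    MvPolynomial.eval₂Hom (RingHom.id _) (fun i => xx f i ^ q) N ≠ 0 := by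
  classical
  intro h0
  obtain ⟨β, hβ⟩ := MvPolynomial.ne_zero_iff.1 hN
  have h1 : ∃ i < f.natDegree, co hf i (MvPolynomial.coeff β N) ≠ 0 := by
    by_contra! h
    apply hβ
    refine co_ext hf fun i hi => ?_
    rw [h i hi, map_zero]
  obtain ⟨i, hi, h2⟩ := h1
  obtain ⟨γ, hγ⟩ := MvPolynomial.ne_zero_iff.1 h2
  have hsmall : ∀ β' γ', MvPolynomial.coeff γ' (co hf i (MvPolynomial.coeff β' N)) ≠ 0 →
      ∀ k, γ' k < q := by
    intro β' γ' h k
    have h3 := MvPolynomial.le_totalDegree (MvPolynomial.mem_support_iff.2 h)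
    exact (le_degree γ' k).trans_lt (lt_of_le_of_lt h3 (hlev β' i hi))
  rw [MvPolynomial.coe_eval₂Hom, MvPolynomial.eval₂_eq'] at h0
  have h3 : ∀ δ : Fin m →₀ ℕ, (RingHom.id (AdjoinRoot f)) (MvPolynomial.coeff δ N) *
      ∏ k, (xx f k ^ q) ^ δ k = AdjoinRoot.of f (MvPolynomial.monomial (q • δ) 1) *
        MvPolynomial.coeff δ N := by
    intro δ
    rw [MvPolynomial.monomial_eq, Finsupp.prod_fintype _ _ (by simp), mul_comm]
    simp [xx, pow_mul]
  simp only [h3] at h0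
  have h4 := congrArg (fun s => MvPolynomial.coeff (q • β + γ) (co hf i s)) h0
  simp only [map_sum, MvPolynomial.coeff_sum, co_of_mul, map_zero, MvPolynomial.coeff_zero] at h4
  rw [Finset.sum_eq_single β] at h4
  · rw [MvPolynomial.coeff_monomial_mul, one_mul] at h4
    exact hγ h4
  · intro δ _ hδ
    rw [MvPolynomial.coeff_monomial_mul']
    split_ifs with hle
    · rw [one_mul]
      by_contra h5
      apply hδ
      ext k
      have h6 := hsmall _ _ h5 k
      have h7 := hsmall _ _ hγ k
      have h8 := hle k
      simp only [Finsupp.coe_tsub, Finsupp.coe_add, Finsupp.coe_smul, Pi.sub_apply, Pi.add_apply,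
        Pi.smul_apply, smul_eq_mul] at h6 h8
      rcases lt_trichotomy (δ k) (β k) with h | h | h
      · have := Nat.mul_le_mul_left q (Nat.succ_le_of_lt h)
        rw [Nat.succ_eq_add_one, mul_add, mul_one] at this
        omega
      · exact h
      · have := Nat.mul_le_mul_left q (Nat.succ_le_of_lt h)
        rw [Nat.succ_eq_add_one, mul_add, mul_one] at this
        omega
    · rfl
  · intro hn
    exact absurd (MvPolynomial.mem_support_iff.2 hβ) hn

/-- level constant for the norm of P -/
def CN (e d A : ℕ) : ℕ := e * ((A + e * d + e * (0 + e * d)) + e * (0 + e * d) + e * d)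

lemma phi_PP_ne [IsAlgClosed F] (hf : f.Monic) (hpos : 0 < f.natDegree) {d : ℕ}
    (hd : ∀ i, f.coeff i ∈ (Filt.tdeg (Fin m) F).G d) [IsDomain (AdjoinRoot f)]
    {q : ℕ} (h : f.eval₂ (MvPolynomial.eval₂Hom
      ((RingHom.id _).comp (sc f)) (fun i => xx f i ^ q)) (AdjoinRoot.root f ^ q) = 0)
    (A Kk : ℕ) (v) (hv : v ≠ 0) (hq : CN f.natDegree d A < q) :
    phi q h (PP f A Kk v) ≠ 0 := by
  have hdom : IsDomain (BB f) := isDomain_BB hf hpos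
  have h1 : PP f A Kk v ∈ (PhiU hf hpos hd).adjG (fU_monic hf)
      (A + f.natDegree * d + f.natDegree * (0 + f.natDegree * d)) := by
    refine AddSubgroup.sum_mem _ fun t _ => ?_
    have h2 := (PhiU hf hpos hd).adjG_root_pow_mul (fU_monic hf) (fU_pos hf hpos)
      (fU_PhiU hf hpos hd) (of_adjG (PhiU hf hpos hd) (fU_monic hf) (fU_pos hf hpos)
        (monomial_PhiU hf hpos hd t.2.1.1 (el_lev hf hpos hd t.1.1 t.2.2.1 (v t)))) t.2.2.2
    rw [mul_comm (AdjoinRoot.root (fU f) ^ _)] at h2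
    refine (PhiU hf hpos hd).adjG_mono _ ?_ h2
    rw [PhiU_c]
    have h3 : (t.2.2.1 : ℕ) * d ≤ f.natDegree * d := Nat.mul_le_mul_right _ t.2.2.1.2.le
    have h4 := Nat.mul_le_mul_right (0 + f.natDegree * d) t.2.2.2.2.le
    have h5 := t.1.2
    omega
  have h2 : (mulMat (fU_monic hf) (PP f A Kk v)).det ∈
      (PhiU hf hpos hd).G (CN f.natDegree d A) := by
    refine Filt.mono _ (le_of_eq ?_)
      (det_filt (fU_monic hf) _ (fU_pos hf hpos) (fU_PhiU hf hpos hd) h1)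
    rw [fU_natDegree hf hpos, PhiU_c, CN]
  have h3 := det_ne_zero (fU_monic hf) (PP_ne hf hpos A Kk v hv)
  intro h0
  refine eval_frob_ne hf (q := q) _ h3 ?_ ?_
  · intro β i hi
    have h4 : (co hf i (MvPolynomial.coeff β (mulMat (fU_monic hf) (PP f A Kk v)).det)).totalDegree
      ≤ _ := h2 β i hi
    exact lt_of_le_of_lt h4 hq
  · obtain ⟨c, hc⟩ := dvd_det (fU_monic hf) (PP f A Kk v)
    have h5 := congrArg (phi q h) hc
    rw [map_mul, h0, zero_mul, phi, bhom_of] at h5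
    exact h5

lemma phi_PP_lev (hf : f.Monic) (hpos : 0 < f.natDegree) {d : ℕ}
    (hd : ∀ i, f.coeff i ∈ (Filt.tdeg (Fin m) F).G d)
    {q : ℕ} (h : f.eval₂ (MvPolynomial.eval₂Hom
      ((RingHom.id _).comp (sc f)) (fun i => xx f i ^ q)) (AdjoinRoot.root f ^ q) = 0)
    (A Kk : ℕ) (v) :
    phi q h (PP f A Kk v) ∈ (Filt.tdeg (Fin m) F).adjG hf
      (A + q * Kk + (f.natDegree + q * f.natDegree) * d) := by
  rw [PP, map_sum]
  refine AddSubgroup.sum_mem _ fun t _ => ?_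
  have h1 : phi q h (AdjoinRoot.of (fU f)
      (MvPolynomial.monomial t.2.1.1 (el f t.1.1 t.2.2.1 (v t))) *
    AdjoinRoot.root (fU f) ^ (t.2.2.2 : ℕ)) =
      el f (q • t.2.1.1 + t.1.1) (t.2.2.1 + q * t.2.2.2) (v t) := by
    rw [map_mul, map_pow, phi, bhom_of, bhom_root, MvPolynomial.coe_eval₂Hom,
      MvPolynomial.eval₂_monomial, el, el, Finsupp.prod_fintype _ _ (by simp)]
    have : MvPolynomial.monomial (q • t.2.1.1 + t.1.1) (v t) =
      MvPolynomial.monomial (q • t.2.1.1) (1 : F) * MvPolynomial.monomial t.1.1 (v t) := by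
      rw [MvPolynomial.monomial_mul, one_mul]
    rw [this, MvPolynomial.monomial_eq (s := q • t.2.1.1), Finsupp.prod_fintype _ _ (by simp)]
    simp only [xx, map_mul, map_prod, map_pow, RingHom.id_apply, pow_add, pow_mul, map_one,
      Finsupp.coe_smul, Pi.smul_apply, smul_eq_mul]
    ring
  rw [h1]
  refine Filt.adjG_mono _ _ ?_ (el_level hf hpos hd _ _ _)
  rw [map_add, map_nsmul, smul_eq_mul]
  have e1 := t.1.2
  have e2 := Nat.mul_le_mul_left q t.2.1.2.le
  have e3 : (t.2.2.1 + q * t.2.2.2 : ℕ) * d ≤ (f.natDegree + q * f.natDegree) * d :=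
    Nat.mul_le_mul_right _ (Nat.add_le_add t.2.2.1.2.le (Nat.mul_le_mul_left _ t.2.2.2.2.le))
  omega

end core2

/-- choice of parameters -/
lemma params (m e d : ℕ) (he : 0 < e) : ∃ A Kk M : ℕ, M = Kk + (e * d + 3) ∧
    cnt m (A + CC e d Kk M) * (e * (cnt m M * e)) <
      cnt m A * (cnt m Kk * (e * e)) + cnt m M * (cnt m A * e) := by
  obtain ⟨Kk, -, hK⟩ := exists_ratio m (e - 1) (e * d + 3)
  obtain ⟨A, hA0, hA⟩ := exists_ratio m (e * cnt m (Kk + (e * d + 3)))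
    (CC e d Kk (Kk + (e * d + 3)))
  refine ⟨A, Kk, _, rfl, ?_⟩
  generalize cnt m (Kk + (e * d + 3)) = cM at *
  generalize cnt m (A + CC e d Kk (Kk + (e * d + 3))) = cA' at *
  generalize cnt m A = cA at *
  generalize cnt m Kk = cK at *
  obtain ⟨e, rfl⟩ : ∃ e', e = e' + 1 := ⟨e - 1, by omega⟩
  rw [Nat.add_sub_cancel] at hK
  have h1 : (e + 1) * cM + 1 ≤ (e + 1) * cK + cM := by
    nlinarith
  have h2 : (e + 1) * cM * cA' < ((e + 1) * cK + cM) * cA :=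
    hA.trans_le (Nat.mul_le_mul_right _ h1)
  have h3 := Nat.mul_lt_mul_of_pos_left h2 he
  calc _ = (e + 1) * ((e + 1) * cM * cA') := by ring
    _ < _ := h3
    _ = _ := by ring

theorem core (m e d : ℕ) (he : 0 < e) : ∃ N₀ : ℕ, ∀ (K F : Type) [Field K] [Fintype K] [Field F]
    [IsAlgClosed F] [Algebra K F] (fK : (MvPolynomial (Fin m) K)[X]), N₀ ≤ Fintype.card K →
    fK.Monic → fK.natDegree = e → (∀ i, (fK.coeff i).totalDegree ≤ d) →
    Irreducible (fK.map (MvPolynomial.map (algebraMap K F))) →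
    derivative (fK.map (MvPolynomial.map (algebraMap K F))) ≠ 0 →
    ∃ (x : Fin m → K) (y : K), (fK.map (MvPolynomial.eval x)).eval y = 0 := by
  obtain ⟨A, Kk, M, hM, hdim⟩ := params m e d he
  refine ⟨A + 2 * (e * d) + CN e d A + 2, ?_⟩
  intro K F _ _ _ _ _ fK hq hmon hdeg hcoef hirr hder
  by_contra! hno
  obtain ⟨f, hfK⟩ : ∃ f, f = fK.map (MvPolynomial.map (algebraMap K F)) := ⟨_, rfl⟩
  rw [← hfK] at hirr hder
  have hf : f.Monic := by rw [hfK]; exact hmon.map _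
  have hfe : f.natDegree = e := by rw [hfK, hmon.natDegree_map, hdeg]
  have hpos : 0 < f.natDegree := by omega
  have hd : ∀ i, f.coeff i ∈ (Filt.tdeg (Fin m) F).G d := by
    intro i
    rw [Filt.mem_tdeg, hfK, Polynomial.coeff_map]
    exact (Finset.sup_mono (MvPolynomial.support_map_subset _ _)).trans (hcoef i)
  have hdom : IsDomain (AdjoinRoot f) := AdjoinRoot.isDomain_of_prime hirr.prime
  have hex : ∃ h, phi (Fintype.card K) h (gg f) ∈
      (IZ F m (Fintype.card K)).map (AdjoinRoot.of f) := ⟨_, phi_gg_mem fK hfK hno⟩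
  generalize Fintype.card K = q at *
  obtain ⟨hfr, hg⟩ := hex
  subst hfe
  obtain ⟨v, z, hne, hker⟩ := exists_DD hf hpos hd A Kk M hdim
  have hv := v_ne_zero hf hder A Kk M v z hne hker
  have h1 := phi_mem_pow hf hfr M _ hker
  have h2 : phi q hfr (PP f A Kk v) ∈ ((IZ F m q).map (AdjoinRoot.of f)) ^ M := by
    have : PP f A Kk v = DD A Kk M v z +
      AdjoinRoot.of (fU f) (shi f (Z0 f A M z)) * gg f ^ M := by rw [DD]; ring
    rw [this, map_add, map_mul, map_pow]
    exact Ideal.add_mem _ h1 (Ideal.mul_mem_left _ _ (Ideal.pow_mem_pow hg M))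
  rw [← Ideal.map_pow] at h2
  have h3 := det_mem_pow hf _ _ h2
  rw [← pow_mul] at h3
  have h4 := det_ne_zero hf (phi_PP_ne hf hpos hd hfr A Kk v hv (by omega))
  have h5 := degree_of_mem_pow q (by omega) _ _ h3 h4
  have h6 : _ ≤ _ := (Filt.mem_tdeg).1 (det_filt hf _ hpos hd (phi_PP_lev hf hpos hd hfr A Kk v))
  have h7 := h5.trans h6
  change _ ≤ f.natDegree * (A + q * Kk + (f.natDegree + q * f.natDegree) * d +
    f.natDegree * (d + 0) + 0) at h7
  have h8 : q * M ≤ A + q * Kk + (f.natDegree + q * f.natDegree) * d + f.natDegree * d := by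
    refine Nat.le_of_mul_le_mul_left ?_ hpos
    calc _ = q * (M * f.natDegree) := by ring
      _ ≤ _ := h7
      _ = _ := by ring
  rw [hM] at h8
  generalize CN f.natDegree d A = cn at *
  nlinarith

end LW

namespace LW

open Polynomial

section reduction

/-- Base part of the substitution. -/
noncomputable def thB (K : Type*) [CommRing K] (m : ℕ) : Fin (m + 1) → MvPolynomial (Fin m) K :=
  Fin.cons 0 MvPolynomial.X

/-- The linear substitution. -/
noncomputable def th {K : Type*} [CommRing K] {m : ℕ} (v : Fin (m + 1) → K) :
    MvPolynomial (Fin (m + 1)) K →+* (MvPolynomial (Fin m) K)[X] :=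
  MvPolynomial.eval₂Hom ((Polynomial.C).comp MvPolynomial.C)
    (fun i => C (thB K m i) + C (MvPolynomial.C (v i)) * X)

variable {K : Type*} [Field K] {m : ℕ}

@[simp] lemma th_C (v : Fin (m + 1) → K) (a : K) : th v (MvPolynomial.C a) = C (MvPolynomial.C a) := by
  simp [th]

@[simp] lemma th_X (v : Fin (m + 1) → K) (i) : th v (MvPolynomial.X i) =
    C (thB K m i) + C (MvPolynomial.C (v i)) * X := by
  simp [th]

/-- Inverse substitution. -/
noncomputable def thInv (v : Fin (m + 1) → K) :
    (MvPolynomial (Fin m) K)[X] →+* MvPolynomial (Fin (m + 1)) K :=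
  Polynomial.eval₂RingHom
    (MvPolynomial.eval₂Hom MvPolynomial.C
      (fun i => MvPolynomial.X i.succ - MvPolynomial.C (v i.succ * (v 0)⁻¹) * MvPolynomial.X 0))
    (MvPolynomial.C (v 0)⁻¹ * MvPolynomial.X 0)

lemma thInv_th (v : Fin (m + 1) → K) (hv : v 0 ≠ 0) : (thInv v).comp (th v) = RingHom.id _ := by
  apply MvPolynomial.ringHom_ext
  · intro r; simp [thInv]
  · intro i
    refine Fin.cases ?_ (fun i => ?_) i
    · simp only [RingHom.comp_apply, th_X, thB, Fin.cons_zero, map_zero, zero_add, thInv]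
      simp [← mul_assoc, ← map_mul, hv, -map_mul]
      simp [← MvPolynomial.C_mul, hv]
    · simp [thInv, thB]
      ring

lemma th_thInv (v : Fin (m + 1) → K) (hv : v 0 ≠ 0) : (th v).comp (thInv v) = RingHom.id _ := by
  have h0 : (C (MvPolynomial.C (v 0)⁻¹) : (MvPolynomial (Fin m) K)[X]) * C (MvPolynomial.C (v 0)) = 1 := by
    rw [← C_mul, ← MvPolynomial.C_mul, inv_mul_cancel₀ hv]; simp
  apply Polynomial.ringHom_ext'
  · apply MvPolynomial.ringHom_ext
    · intro r; simp [thInv]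
    · intro i
      simp [thInv, thB]
      linear_combination (-C (MvPolynomial.C (v i.succ)) * X) * h0
  · simp [thInv, thB]
    linear_combination X * h0

/-- The substitution as an equivalence. -/
noncomputable def thEquiv (v : Fin (m + 1) → K) (hv : v 0 ≠ 0) :
    MvPolynomial (Fin (m + 1)) K ≃+* (MvPolynomial (Fin m) K)[X] :=
  RingEquiv.ofRingHom (th v) (thInv v) (th_thInv v hv) (thInv_th v hv)

lemma th_irred (v : Fin (m + 1) → K) (hv : v 0 ≠ 0) {f : MvPolynomial (Fin (m + 1)) K}
    (hf : Irreducible f) : Irreducible (th v f) := by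
  have := (MulEquiv.irreducible_iff (thEquiv v hv) (x := f)).2 hf
  exact this

lemma th_inj (v : Fin (m + 1) → K) (hv : v 0 ≠ 0) : Function.Injective (th v) :=
  (thEquiv v hv).injective

lemma th_map {L : Type*} [Field L] (ι : K →+* L) (v : Fin (m + 1) → K)
    (f : MvPolynomial (Fin (m + 1)) K) :
    (th v f).map (MvPolynomial.map ι) = th (fun i => ι (v i)) (MvPolynomial.map ι f) := by
  have : (Polynomial.mapRingHom (MvPolynomial.map ι)).comp (th v) =
      (th (fun i => ι (v i))).comp (MvPolynomial.map ι) := by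
    apply MvPolynomial.ringHom_ext
    · intro r; simp
    · intro i
      refine Fin.cases ?_ (fun i => ?_) i <;> simp [thB]
  exact congrArg (fun g => g f) this

lemma th_eval (v : Fin (m + 1) → K) (f : MvPolynomial (Fin (m + 1)) K) (x : Fin m → K) (y : K) :
    ((th v f).map (MvPolynomial.eval x)).eval y =
      MvPolynomial.eval (fun i => MvPolynomial.eval x (thB K m i) + v i * y) f := by
  have : ((Polynomial.evalRingHom y).comp (Polynomial.mapRingHom (MvPolynomial.eval x))).comp (th v) =
      MvPolynomial.eval (fun i => MvPolynomial.eval x (thB K m i) + v i * y) := by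
    apply MvPolynomial.ringHom_ext
    · intro r; simp
    · intro i
      simp
  exact congrArg (fun g => g f) this

lemma th_deriv (v : Fin (m + 1) → K) (f : MvPolynomial (Fin (m + 1)) K) :
    derivative (th v f) = th v (∑ i, MvPolynomial.C (v i) * MvPolynomial.pderiv i f) := by
  induction f using MvPolynomial.induction_on with
  | C a => simp
  | add p q hp hq =>
    simp only [map_add, hp, hq, mul_add, Finset.sum_add_distrib]
  | mul_X p j hp =>
    rw [map_mul, derivative_mul, hp, th_X]
    have h1 : ∀ i, MvPolynomial.C (v i) * MvPolynomial.pderiv i (p * MvPolynomial.X j) =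
        (MvPolynomial.C (v i) * MvPolynomial.pderiv i p) * MvPolynomial.X j +
          (if i = j then MvPolynomial.C (v i) * p else 0) := by
      intro i
      rw [MvPolynomial.pderiv_mul]
      by_cases h : i = j
      · subst h; simp; ring
      · rw [MvPolynomial.pderiv_X_of_ne (Ne.symm h), if_neg h]; ring
    simp only [h1]
    rw [Finset.sum_add_distrib, ← Finset.sum_mul, Finset.sum_ite_eq' , if_pos (Finset.mem_univ _),
      map_add (th v), map_mul (th v), map_mul (th v), th_X, th_C]
    simp
    ring

/-- The weight filtration. -/
noncomputable def wF (K : Type*) [Field K] (m : ℕ) : Filt ((MvPolynomial (Fin m) K)[X]) where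
  G a :=
    { carrier := {g | ∀ k s, MvPolynomial.coeff s (g.coeff k) ≠ 0 → s.degree + k ≤ a}
      zero_mem' := by intro k s h; simp at h
      add_mem' := by
        intro g h hg hh k s hs
        rw [coeff_add, MvPolynomial.coeff_add] at hs
        by_cases h1 : MvPolynomial.coeff s (g.coeff k) = 0
        · rw [h1, zero_add] at hs; exact hh k s hs
        · exact hg k s h1
      neg_mem' := by
        intro g hg k s hs
        rw [coeff_neg, MvPolynomial.coeff_neg, neg_ne_zero] at hs
        exact hg k s hs }
  c := 0
  mono := by
    intro a b hab g hg k s hs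
    exact (hg k s hs).trans hab
  one := by
    intro k s hs
    rw [coeff_one] at hs
    split_ifs at hs with h
    · rw [MvPolynomial.coeff_one] at hs
      split_ifs at hs with h'
      · subst h; subst h'; simp
      · simp at hs
    · simp at hs
  mul := by
    intro a b g h hg hh k s hs
    rw [coeff_mul, MvPolynomial.coeff_sum] at hs
    obtain ⟨⟨k1, k2⟩, hk, h1⟩ := Finset.exists_ne_zero_of_sum_ne_zero hs
    rw [MvPolynomial.coeff_mul] at h1
    obtain ⟨⟨s1, s2⟩, hss, h2⟩ := Finset.exists_ne_zero_of_sum_ne_zero h1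
    have e1 := hg k1 s1 (left_ne_zero_of_mul h2)
    have e2 := hh k2 s2 (right_ne_zero_of_mul h2)
    rw [Finset.HasAntidiagonal.mem_antidiagonal] at hk hss
    simp only at hk hss
    rw [← hk, ← hss, map_add]
    omega

lemma th_mem (v : Fin (m + 1) → K) (f : MvPolynomial (Fin (m + 1)) K) :
    th v f ∈ (wF K m).G f.totalDegree := by
  rw [th, MvPolynomial.coe_eval₂Hom, MvPolynomial.eval₂_eq]
  apply Filt.sum_mem
  intro s hs
  rw [mul_comm]
  have hC : ∀ a : K, (C (MvPolynomial.C a) : (MvPolynomial (Fin m) K)[X]) ∈ (wF K m).G 0 := by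
    intro a k s hs
    rw [coeff_C] at hs
    split_ifs at hs with h
    · rw [MvPolynomial.coeff_C] at hs
      split_ifs at hs with h'
      · subst h; subst h'; simp
      · simp at hs
    · simp at hs
  have hX : (X : (MvPolynomial (Fin m) K)[X]) ∈ (wF K m).G 1 := by
    intro k s hs
    rw [coeff_X] at hs
    split_ifs at hs with h
    · rw [MvPolynomial.coeff_one] at hs
      split_ifs at hs with h'
      · subst h; subst h'; simp
      · simp at hs
    · simp at hs
  have hB : ∀ i, (C (thB K m i) : (MvPolynomial (Fin m) K)[X]) ∈ (wF K m).G 1 := by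
    intro i
    refine Fin.cases ?_ (fun i => ?_) i
    · simp only [thB, Fin.cons_zero, map_zero]; exact AddSubgroup.zero_mem _
    · intro k s hs
      rw [coeff_C] at hs
      split_ifs at hs with h
      · simp only [thB, Fin.cons_succ] at hs
        rw [MvPolynomial.coeff_X] at hs
        split_ifs at hs with h'
        · subst h; subst h'; simp
        · simp at hs
      · simp at hs
  have := (wF K m).prod_pow_mul_mem (fun i => C (thB K m i) + C (MvPolynomial.C (v i)) * X)
    (a := 0) (b := 1) (s := C (MvPolynomial.C (MvPolynomial.coeff s f)))
    (fun i => AddSubgroup.add_mem _ (hB i) ((wF K m).mul 0 1 _ _ (hC _) hX)) (hC _) s.support s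
  refine (wF K m).mono ?_ this
  have h2 := MvPolynomial.le_totalDegree hs
  simp only [wF]
  rw [Finsupp.sum] at h2
  omega

lemma th_coeff_top (v : Fin (m + 1) → K) (f : MvPolynomial (Fin (m + 1)) K) :
    (th v f).coeff f.totalDegree =
      MvPolynomial.C (MvPolynomial.eval v (MvPolynomial.homogeneousComponent f.totalDegree f)) := by
  set δ := f.totalDegree with hδ
  have h1 : ((th v f).coeff δ) = MvPolynomial.C (MvPolynomial.coeff 0 ((th v f).coeff δ)) := by
    ext s
    rw [MvPolynomial.coeff_C]
    split_ifs with h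
    · rw [h]
    · by_contra h2
      have := th_mem v f δ s h2
      have h3 : s.degree = 0 := by omega
      exact h ((Finsupp.degree_eq_zero_iff s).1 h3).symm
  rw [h1]
  congr 1
  have h2 : (th v f).map (MvPolynomial.eval (0 : Fin m → K)) =
      MvPolynomial.eval₂Hom C (fun i => C (v i) * X) f := by
    have : (Polynomial.mapRingHom (MvPolynomial.eval (0 : Fin m → K))).comp (th v) =
        MvPolynomial.eval₂Hom C (fun i => C (v i) * X) := by
      apply MvPolynomial.ringHom_ext
      · intro r; simp
      · intro i
        refine Fin.cases ?_ (fun i => ?_) i <;> simp [thB]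
    exact congrArg (fun g => g f) this
  have h3 := congrArg (fun g => g.coeff δ) h2
  simp only [coeff_map] at h3
  have h4 : MvPolynomial.coeff 0 ((th v f).coeff δ) = MvPolynomial.eval (0 : Fin m → K) ((th v f).coeff δ) := by
    rw [MvPolynomial.eval_zero, MvPolynomial.constantCoeff_eq]
  rw [h4, h3, MvPolynomial.coe_eval₂Hom, MvPolynomial.eval₂_eq, MvPolynomial.homogeneousComponent_apply,
    finsetSum_coeff, map_sum, Finset.sum_filter]
  apply Finset.sum_congr rfl
  intro s hs
  have e : (C (MvPolynomial.coeff s f) * ∏ i ∈ s.support, (C (v i) * X) ^ s i : K[X]) =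
      C (MvPolynomial.coeff s f * ∏ i ∈ s.support, v i ^ s i) * X ^ s.degree := by
    rw [Finsupp.degree_apply, C_mul, mul_assoc]
    congr 1
    simp only [mul_pow, Finset.prod_mul_distrib]
    simp [map_prod, Finset.prod_pow_eq_pow_sum]
  rw [e, coeff_C_mul_X_pow]
  simp only [MvPolynomial.eval_monomial, Finsupp.prod, eq_comm]

lemma exists_pderiv_ne {K L : Type*} [Field K] [Finite K] [Field L] (ι : K →+* L) {σ : Type*}
    (f : MvPolynomial σ K) (hf : Irreducible (MvPolynomial.map ι f)) (p : ℕ) [Fact p.Prime] [CharP K p] :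
    ∃ i, MvPolynomial.pderiv i f ≠ 0 := by
  by_contra! h
  have hdvd : ∀ s ∈ f.support, ∀ i, p ∣ s i := by
    intro s hs i
    by_cases hi : s i = 0
    · simp [hi]
    have := congrArg (MvPolynomial.coeff (s - Finsupp.single i 1)) (h i)
    rw [MvPolynomial.coeff_pderiv, MvPolynomial.coeff_zero] at this
    have e : s - Finsupp.single i 1 + Finsupp.single i 1 = s := by
      apply tsub_add_cancel_of_le
      rw [Finsupp.single_le_iff]; omega
    rw [e] at this
    rcases mul_eq_zero.1 this with h1 | h1
    · exact absurd h1 (MvPolynomial.mem_support_iff.1 hs)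
    · rw [Finsupp.tsub_apply, Finsupp.single_eq_same] at h1
      rw [← CharP.cast_eq_zero_iff K p]
      rw [← h1, ← Nat.cast_add_one]
      congr 1
      omega
  have hp : p.Prime := Fact.out
  have hsurj : Function.Surjective (frobenius K p) :=
    Finite.surjective_of_injective (frobenius_inj K p)
  choose r hr using hsurj
  have hex : f = (∑ s ∈ f.support, MvPolynomial.monomial (s.mapRange (· / p) (Nat.zero_div p))
      (r (MvPolynomial.coeff s f))) ^ p := by
    rw [sum_pow_char]
    conv_lhs => rw [f.as_sum]
    apply Finset.sum_congr rfl
    intro s hs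
    rw [MvPolynomial.monomial_pow]
    have h1 := hr (MvPolynomial.coeff s f)
    rw [frobenius_def] at h1
    rw [h1]
    have h2 : p • s.mapRange (· / p) (Nat.zero_div p) = s := by
      ext i
      simp [Nat.mul_div_cancel' (hdvd s hs i)]
    rw [h2]
  rw [hex, map_pow] at hf
  exact not_irreducible_pow hp.ne_one hf

lemma exists_eval_ne {K : Type*} [Field K] [Fintype K] {n : ℕ} (g : MvPolynomial (Fin n) K) (hg : g ≠ 0)
    (h : g.totalDegree < Fintype.card K) : ∃ v, MvPolynomial.eval v g ≠ 0 := by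
  classical
  by_contra! hv
  have := MvPolynomial.schwartz_zippel_totalDegree hg (Finset.univ : Finset K)
  have hq : (0 : ℚ≥0) < Fintype.card K := by exact_mod_cast Fintype.card_pos
  simp only [hv, Finset.filter_true, Fintype.card_piFinset, Finset.prod_const, Finset.card_univ,
    Fintype.card_fin, Nat.cast_pow] at this
  rw [div_self (by positivity), le_div_iff₀ hq, one_mul] at this
  have : Fintype.card K ≤ g.totalDegree := by exact_mod_cast this
  omega

theorem reduced (m d : ℕ) : ∃ N₀ : ℕ, ∀ (K F : Type) [Field K] [Fintype K] [Field F]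
    [IsAlgClosed F] [Algebra K F] (p : ℕ) [Fact p.Prime] [CharP K p]
    (f : MvPolynomial (Fin (m + 1)) K), N₀ ≤ Fintype.card K →
    1 ≤ f.totalDegree → f.totalDegree ≤ d →
    Irreducible (MvPolynomial.map (algebraMap K F) f) →
    ∃ x : Fin (m + 1) → K, MvPolynomial.eval x f = 0 := by
  have hcore := fun e : ℕ => core m (e + 1) d (Nat.succ_pos e)
  choose N hN using hcore
  refine ⟨∑ e ∈ Finset.range d, N e + d + 3, ?_⟩
  intro K F _ _ _ _ _ p _ _ f hcard h1 hd hirr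
  set δ := f.totalDegree with hδ
  have hf0 : f ≠ 0 := by
    rintro rfl
    simp [hδ] at h1
  obtain ⟨i, hi⟩ := exists_pderiv_ne (algebraMap K F) f hirr p
  obtain ⟨μ, hμ⟩ := MvPolynomial.ne_zero_iff.1 hi
  set H := MvPolynomial.homogeneousComponent δ f with hH
  have hH0 : H ≠ 0 := by
    obtain ⟨s, hs, hs2⟩ := Finset.exists_mem_eq_sup f.support
      (MvPolynomial.support_nonempty.2 hf0) (fun s => s.sum fun _ e => e)
    rw [MvPolynomial.ne_zero_iff]
    refine ⟨s, ?_⟩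
    rw [hH, MvPolynomial.coeff_homogeneousComponent, if_pos]
    · exact MvPolynomial.mem_support_iff.1 hs
    · rw [hδ, MvPolynomial.totalDegree, hs2, Finsupp.degree_apply, Finsupp.sum]
  have hHd : H.totalDegree ≤ d :=
    ((MvPolynomial.homogeneousComponent_isHomogeneous δ f).totalDegree_le).trans hd
  set L : MvPolynomial (Fin (m + 1)) K :=
    ∑ j, MvPolynomial.C (MvPolynomial.coeff μ (MvPolynomial.pderiv j f)) * MvPolynomial.X j with hL
  have hL0 : L ≠ 0 := by
    intro h
    have := congrArg (MvPolynomial.eval (Pi.single i 1)) h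
    simp [hL, Pi.single_apply] at this
    exact hμ this
  have hLd : L.totalDegree ≤ 1 := by
    apply MvPolynomial.totalDegree_finsetSum_le
    intro j _
    refine (MvPolynomial.totalDegree_mul _ _).trans ?_
    simp
  obtain ⟨v, hv⟩ := exists_eval_ne (H * MvPolynomial.X 0 * L)
    (mul_ne_zero (mul_ne_zero hH0 (MvPolynomial.X_ne_zero _)) hL0) (by
      have a1 := MvPolynomial.totalDegree_mul (H * MvPolynomial.X 0) L
      have a2 := MvPolynomial.totalDegree_mul H (MvPolynomial.X 0)
      have a3 := MvPolynomial.totalDegree_X (R := K) (0 : Fin (m + 1))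
      omega)
  simp only [map_mul, MvPolynomial.eval_X, mul_ne_zero_iff] at hv
  obtain ⟨⟨hvH, hv0⟩, hvL⟩ := hv
  set c0 := MvPolynomial.eval v H with hc0
  have htop : (th v f).coeff δ = MvPolynomial.C c0 := th_coeff_top v f
  have hmem := th_mem v f
  have hnd : (th v f).natDegree ≤ δ := by
    rw [natDegree_le_iff_coeff_eq_zero]
    intro k hk
    by_contra h
    obtain ⟨s, hs⟩ := MvPolynomial.ne_zero_iff.1 h
    have := hmem k s hs
    omega
  have hunit : IsUnit (C (MvPolynomial.C c0⁻¹) : (MvPolynomial (Fin m) K)[X]) :=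
    ((isUnit_iff_ne_zero.2 (inv_ne_zero hvH)).map MvPolynomial.C).map C
  set fK := C (MvPolynomial.C c0⁻¹) * th v f with hfK
  have hcoeff : ∀ k, fK.coeff k = MvPolynomial.C c0⁻¹ * (th v f).coeff k := fun k => by
    rw [hfK, coeff_C_mul]
  have hle : fK.natDegree ≤ δ := by
    rw [natDegree_le_iff_coeff_eq_zero]
    intro k hk
    rw [hcoeff, coeff_eq_zero_of_natDegree_lt (lt_of_le_of_lt hnd hk), mul_zero]
  have hone : fK.coeff δ = 1 := by
    rw [hcoeff, htop, ← MvPolynomial.C_mul, inv_mul_cancel₀ hvH, MvPolynomial.C_1]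
  have hmonic : fK.Monic := monic_of_natDegree_le_of_coeff_eq_one δ hle hone
  have hdeg : fK.natDegree = δ := le_antisymm hle (le_natDegree_of_ne_zero (by rw [hone]; exact one_ne_zero))
  have hirr1 : Irreducible (fK.map (MvPolynomial.map (algebraMap K F))) := by
    rw [hfK, Polynomial.map_mul, irreducible_isUnit_mul, th_map]
    · exact th_irred _ (by simpa using hv0) hirr
    · exact hunit.map (Polynomial.mapRingHom (MvPolynomial.map (algebraMap K F)))
  have hder : derivative (fK.map (MvPolynomial.map (algebraMap K F))) ≠ 0 := by
    rw [derivative_map]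
    have hinj : Function.Injective (MvPolynomial.map (σ := Fin m) (algebraMap K F)) :=
      MvPolynomial.map_injective _ (algebraMap K F).injective
    rw [Ne, Polynomial.map_eq_zero_iff hinj, hfK, derivative_C_mul]
    rw [hunit.mul_right_eq_zero, th_deriv, map_eq_zero_iff _ (th_inj v hv0)]
    intro h
    apply hvL
    have := congrArg (MvPolynomial.coeff μ) h
    simp only [MvPolynomial.coeff_sum, MvPolynomial.coeff_C_mul, MvPolynomial.coeff_zero] at this
    rw [hL]
    simpa [mul_comm] using this
  have htd : ∀ k, (fK.coeff k).totalDegree ≤ d := by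
    intro k
    rw [hcoeff]
    refine (MvPolynomial.totalDegree_mul _ _).trans ?_
    rw [MvPolynomial.totalDegree_C, zero_add]
    apply Finset.sup_le
    intro s hs
    have := hmem k s (MvPolynomial.mem_support_iff.1 hs)
    rw [Finsupp.degree_apply] at this
    rw [Finsupp.sum]
    omega
  have hNle : N (δ - 1) ≤ ∑ e ∈ Finset.range d, N e :=
    Finset.single_le_sum (f := N) (fun _ _ => Nat.zero_le _) (Finset.mem_range.2 (by omega))
  obtain ⟨x, y, hxy⟩ := hN (δ - 1) K F fK (by omega) hmonic (by omega) htd hirr1 hder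
  refine ⟨fun i => MvPolynomial.eval x (thB K m i) + v i * y, ?_⟩
  rw [← th_eval]
  rw [hfK, Polynomial.map_mul, eval_mul] at hxy
  rcases mul_eq_zero.1 hxy with h | h
  · simp at h
    exact absurd h hvH
  · exact h

end reduction

end LW

/-- Absolutely irreducible hypersurfaces over large finite fields have rational points:
for `n ≥ 2`, `d ≥ 1` there is `N₀` depending only on `n` and `d` such that for any finite
field `K` with `q = p^k ≥ N₀` elements and any `f ∈ K[x₁,…,xₙ]` of total degree between `1`
and `d` that remains irreducible over the algebraic closure of `K`, `f` has a zero in `K^n`. -/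
theorem absolutely_irreducible_hypersurface_has_point (n d : ℕ) (hn : 2 ≤ n) (hd : 1 ≤ d) :
    ∃ N₀ : ℕ, ∀ (p : ℕ) [Fact p.Prime], ∀ k : ℕ, 1 ≤ k → N₀ ≤ p ^ k →
      ∀ f : MvPolynomial (Fin n) (GaloisField p k),
        1 ≤ f.totalDegree → f.totalDegree ≤ d →
        Irreducible (MvPolynomial.map
          (algebraMap (GaloisField p k) (AlgebraicClosure (GaloisField p k))) f) →
        ∃ x : Fin n → GaloisField p k, MvPolynomial.eval x f = 0 := by
  obtain ⟨m, rfl⟩ : ∃ m, n = m + 1 := ⟨n - 1, by omega⟩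
  obtain ⟨N₀, hN⟩ := LW.reduced m d
  refine ⟨N₀, ?_⟩
  intro p _ k hk hq f h1 h2 hirr
  letI : Fintype (GaloisField p k) := Fintype.ofFinite _
  refine hN (GaloisField p k) (AlgebraicClosure (GaloisField p k)) p f ?_ h1 h2 hirr
  rw [← Nat.card_eq_fintype_card, GaloisField.card p k (by omega)]
  exact hq
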